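/- arXiv:1511.03873 — 3 statements merged into one kernel-verified Lean document; each statement's English description precedes it below -/
import Mathlib

section
/- For every u ∈ C_c^∞(ℝ²;ℝ²) with div u = ∂₁u¹ + ∂₂u² = 0 on ℝ², one has ∫_{ℝ²} ((u(x)·∇)u(x)) · Δu(x) dx = 0, where (u·∇)u = u¹∂₁u + u²∂₂u and Δu = (Δu¹, Δu²) is the componentwise Laplacian. -/
open MeasureTheory Real Set Filter

noncomputable section

/-- Points of the plane `ℝ²`. -/
abbrev Plane := ℝ × ℝ

/-- The first standard basis vector of `ℝ²`. -/
def e1 : Plane := (1, 0)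

/-- The second standard basis vector of `ℝ²`. -/
def e2 : Plane := (0, 1)

/-- The Euclidean inner product on `ℝ²`. -/
def dot (a b : Plane) : ℝ := a.1 * b.1 + a.2 * b.2

/-- The squared Euclidean norm on `ℝ²`. -/
def nsq (a : Plane) : ℝ := a.1 ^ 2 + a.2 ^ 2

/-- The partial derivative `∂ᵢ` of a vector field `f : ℝ² → ℝ²` in the
direction `v`, i.e. `fderiv ℝ f x v`. -/
def pderiv' (f : Plane → Plane) (v : Plane) (x : Plane) : Plane := fderiv ℝ f x v

/-- The divergence `∂₁f¹ + ∂₂f²` of a (smooth) vector field. -/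
def diverg (f : Plane → Plane) (x : Plane) : ℝ :=
  (fderiv ℝ f x e1).1 + (fderiv ℝ f x e2).2

/-- The curl `∂₁f² − ∂₂f¹` of a (smooth) vector field. -/
def curl2 (f : Plane → Plane) (x : Plane) : ℝ :=
  (fderiv ℝ f x e1).2 - (fderiv ℝ f x e2).1

/-- The advection term `(u·∇)v = u¹∂₁v + u²∂₂v`. -/
def advect (u v : Plane → Plane) (x : Plane) : Plane :=
  (u x).1 • fderiv ℝ v x e1 + (u x).2 • fderiv ℝ v x e2

/-- The componentwise Laplacian `Δu = ∂₁∂₁u + ∂₂∂₂u`. -/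
def lap (u : Plane → Plane) (x : Plane) : Plane :=
  fderiv ℝ (fun y => fderiv ℝ u y e1) x e1 + fderiv ℝ (fun y => fderiv ℝ u y e2) x e2

/-- The squared pointwise Euclidean norm `|∇u|² = Σ_{i,j} (∂ⱼuⁱ)²` of the
gradient matrix of a (smooth) vector field. -/
def gradSq (u : Plane → Plane) (x : Plane) : ℝ :=
  nsq (fderiv ℝ u x e1) + nsq (fderiv ℝ u x e2)

/-- The `H¹(ℝ²;ℝ²)` norm `(∫ |f|² + ∫ |∇f|²)^{1/2}` of a smooth compactly
supported vector field. -/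
def h1norm (f : Plane → Plane) : ℝ :=
  Real.sqrt ((∫ x, nsq (f x)) + ∫ x, gradSq f x)

/-!
In the plane, `Δu = ∇(div u) + ∇^⊥ω` with `ω` the curl of `u` and `∇^⊥ = (-∂₂, ∂₁)`, while
Lamb's formula reads `(u·∇)u = ∇(|u|²/2) + ω u^⊥`. For divergence-free `u`, pairing the two gives
`(u·∇)u · Δu = u · ∇(ω²/2) - ∇^⊥(|u|²/2) · ∇ω`, and both `u` and `∇^⊥(|u|²/2)` are divergence-free
and compactly supported, hence orthogonal to gradients.
-/

/-- Rotation of the plane by a quarter turn counterclockwise, the `a ↦ a^⊥` of two-dimensional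
fluid mechanics. -/
def perp (a : Plane) : Plane := (-a.2, a.1)

/-- The gradient `∇g` of a scalar function on the plane, so that `∇^⊥g` is `perp (grad g x)`. It is
written in coordinates because `Plane` carries the sup norm, for which `gradient` is unavailable. -/
def grad (g : Plane → ℝ) (x : Plane) : Plane := (fderiv ℝ g x e1, fderiv ℝ g x e2)

/-- The density `|u|² / 2` of kinetic energy, the potential part of the advection term `(u·∇)u`. -/
def kineticEnergy (u : Plane → Plane) (x : Plane) : ℝ := nsq (u x) / 2

section IntegrationByParts

variable {E F : Type*} [NormedAddCommGroup E] [NormedSpace ℝ E] [MeasurableSpace E]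
  [BorelSpace E] [NormedAddCommGroup F] [NormedSpace ℝ F]

lemma integrable_fderiv_apply_of_hasCompactSupport (μ : Measure E)
    [IsFiniteMeasureOnCompacts μ] {f : E → F} (hf : ContDiff ℝ 1 f)
    (hsupp : HasCompactSupport f) (v : E) :
    Integrable (fun x => fderiv ℝ f x v) μ :=
  ((hf.continuous_fderiv one_ne_zero).clm_apply
    continuous_const).integrable_of_hasCompactSupport (hsupp.fderiv_apply ℝ v)

lemma integral_fderiv_apply_eq_zero [FiniteDimensional ℝ E] (μ : Measure E)
    [μ.IsAddHaarMeasure] {f : E → F} (hf : ContDiff ℝ 1 f) (hsupp : HasCompactSupport f)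
    (v : E) : ∫ x, fderiv ℝ f x v ∂μ = 0 := by
  have hint : Integrable (fun x => fderiv ℝ f x v) μ :=
    integrable_fderiv_apply_of_hasCompactSupport μ hf hsupp v
  have parts := integral_smul_fderiv_eq_neg_fderiv_smul_of_integrable (𝕜 := ℝ) (μ := μ)
    (f := fun _ => (1 : ℝ)) (g := f) (v := v) (by simp) (by simpa using hint)
    (by simpa using hf.continuous.integrable_of_hasCompactSupport hsupp)
    (fun x _ => differentiableAt_const _) (fun x _ => hf.differentiable one_ne_zero x)
  simpa using parts

end IntegrationByParts

section Algebra

lemma dot_grad (a : Plane) (g : Plane → ℝ) (x : Plane) : dot a (grad g x) = fderiv ℝ g x a := by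
  have ha : a = a.1 • e1 + a.2 • e2 := by ext <;> simp [e1, e2]
  conv_rhs => rw [ha]
  simp [dot, grad]

lemma dot_perp_perp (a b : Plane) : dot (perp a) (perp b) = dot a b := by
  simp only [dot, perp]
  ring

lemma dot_perp_right (a b : Plane) : dot a (perp b) = -dot (perp a) b := by
  simp only [dot, perp]
  ring

lemma dot_add_left (a b c : Plane) : dot (a + b) c = dot a c + dot b c := by
  simp only [dot, Prod.fst_add, Prod.snd_add]
  ring

lemma dot_smul_left (r : ℝ) (a b : Plane) : dot (r • a) b = r * dot a b := by
  simp only [dot, Prod.smul_fst, Prod.smul_snd, smul_eq_mul]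
  ring

lemma dot_smul_right (r : ℝ) (a b : Plane) : dot a (r • b) = r * dot a b := by
  simp only [dot, Prod.smul_fst, Prod.smul_snd, smul_eq_mul]
  ring

end Algebra

section FirstOrder

variable {u f : Plane → Plane} {g : Plane → ℝ} {x : Plane}

lemma diverg_smul (hg : DifferentiableAt ℝ g x) (hf : DifferentiableAt ℝ f x) :
    diverg (fun y => g y • f y) x = g x * diverg f x + dot (f x) (grad g x) := by
  simp only [diverg, dot, grad, fderiv_fun_smul hg hf, add_apply, smul_apply,
    ContinuousLinearMap.smulRight_apply, Prod.fst_add, Prod.snd_add, Prod.smul_fst,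
    Prod.smul_snd, smul_eq_mul]
  ring

lemma grad_sq_div_two (hg : DifferentiableAt ℝ g x) :
    grad (fun y => g y ^ 2 / 2) x = g x • grad g x := by
  have h : HasFDerivAt (fun y => g y ^ 2 / 2) _ x := (hg.hasFDerivAt.pow 2).mul_const (2⁻¹ : ℝ)
  simp only [grad, h.fderiv, smul_apply, nsmul_eq_mul, smul_eq_mul, Prod.smul_mk]
  ext <;> push_cast <;> ring

lemma fderiv_kineticEnergy_apply (hu : DifferentiableAt ℝ u x) (v : Plane) :
    fderiv ℝ (kineticEnergy u) x v = dot (u x) (fderiv ℝ u x v) := by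
  have h : HasFDerivAt (kineticEnergy u) _ x :=
    ((hu.hasFDerivAt.fst.pow 2).add (hu.hasFDerivAt.snd.pow 2)).mul_const (2⁻¹ : ℝ)
  simp only [h.fderiv, dot, smul_apply, add_apply, ContinuousLinearMap.comp_apply,
    ContinuousLinearMap.coe_fst', ContinuousLinearMap.coe_snd', nsmul_eq_mul, smul_eq_mul]
  push_cast
  ring

lemma advect_self_eq_grad_kineticEnergy_add (hu : DifferentiableAt ℝ u x) :
    advect u u x = grad (kineticEnergy u) x + curl2 u x • perp (u x) := by
  simp only [advect, grad, fderiv_kineticEnergy_apply hu, curl2, perp, dot]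
  ext <;> simp only [Prod.fst_add, Prod.snd_add, Prod.smul_fst, Prod.smul_snd, smul_eq_mul] <;> ring

lemma contDiff_kineticEnergy {n : WithTop ℕ∞} (hu : ContDiff ℝ n u) :
    ContDiff ℝ n (kineticEnergy u) := by
  unfold kineticEnergy nsq
  fun_prop

lemma hasCompactSupport_kineticEnergy (hsupp : HasCompactSupport u) :
    HasCompactSupport (kineticEnergy u) :=
  hsupp.comp_left (g := fun a => nsq a / 2) (by simp [nsq])

lemma integral_diverg_eq_zero (hf : ContDiff ℝ 1 f) (hsupp : HasCompactSupport f) :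
    ∫ x, diverg f x = 0 := by
  have hint (v : Plane) : Integrable (fun x => fderiv ℝ f x v) :=
    integrable_fderiv_apply_of_hasCompactSupport volume hf hsupp v
  have hzero (v : Plane) : ∫ x, fderiv ℝ f x v = 0 :=
    integral_fderiv_apply_eq_zero volume hf hsupp v
  simp only [diverg]
  rw [integral_add (hint e1).fst (hint e2).snd, ← fst_integral (hint e1), ← snd_integral (hint e2),
    hzero e1, hzero e2, Prod.fst_zero, Prod.snd_zero, add_zero]

lemma integrable_dot_grad (hf : Continuous f) (hsupp : HasCompactSupport f)
    (hg : ContDiff ℝ 1 g) : Integrable (fun x => dot (f x) (grad g x)) := by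
  simp only [dot_grad]
  refine ((hg.continuous_fderiv one_ne_zero).clm_apply hf).integrable_of_hasCompactSupport ?_
  exact hsupp.mono fun x hx h0 => hx (by simp [h0])

lemma integral_dot_grad_eq_zero (hf : ContDiff ℝ 1 f) (hsupp : HasCompactSupport f)
    (hdiv : ∀ x, diverg f x = 0) (hg : ContDiff ℝ 1 g) :
    ∫ x, dot (f x) (grad g x) = 0 := by
  have hprod (x : Plane) : dot (f x) (grad g x) = diverg (fun y => g y • f y) x := by
    rw [diverg_smul (hg.differentiable one_ne_zero x) (hf.differentiable one_ne_zero x), hdiv,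
      mul_zero, zero_add]
  simp only [hprod]
  exact integral_diverg_eq_zero (hg.smul hf) (HasCompactSupport.smul_left (f := g) hsupp)

end FirstOrder

section SecondOrder

variable {u : Plane → Plane} {g : Plane → ℝ} {x : Plane}

lemma fderiv_fderiv_apply {E F : Type*} [NormedAddCommGroup E] [NormedSpace ℝ E]
    [NormedAddCommGroup F] [NormedSpace ℝ F] {f : E → F} {x : E}
    (hf : DifferentiableAt ℝ (fderiv ℝ f) x) (v w : E) :
    fderiv ℝ (fun y => fderiv ℝ f y v) x w = fderiv ℝ (fderiv ℝ f) x w v := by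
  simp [fderiv_clm_apply hf (differentiableAt_const v)]

lemma fderiv_diverg_apply (hu : DifferentiableAt ℝ (fderiv ℝ u) x) (w : Plane) :
    fderiv ℝ (diverg u) x w =
      (fderiv ℝ (fderiv ℝ u) x w e1).1 + (fderiv ℝ (fderiv ℝ u) x w e2).2 := by
  have hpartial (v : Plane) : DifferentiableAt ℝ (fun y => fderiv ℝ u y v) x := by fun_prop
  have h : HasFDerivAt (diverg u) _ x :=
    (hpartial e1).hasFDerivAt.fst.add (hpartial e2).hasFDerivAt.snd
  simp [h.fderiv, fderiv_fderiv_apply hu]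

lemma fderiv_curl2_apply (hu : DifferentiableAt ℝ (fderiv ℝ u) x) (w : Plane) :
    fderiv ℝ (curl2 u) x w =
      (fderiv ℝ (fderiv ℝ u) x w e1).2 - (fderiv ℝ (fderiv ℝ u) x w e2).1 := by
  have hpartial (v : Plane) : DifferentiableAt ℝ (fun y => fderiv ℝ u y v) x := by fun_prop
  have h : HasFDerivAt (curl2 u) _ x :=
    (hpartial e1).hasFDerivAt.snd.sub (hpartial e2).hasFDerivAt.fst
  simp [h.fderiv, fderiv_fderiv_apply hu]

lemma fderiv_perp_grad_apply (hg : DifferentiableAt ℝ (fderiv ℝ g) x) (w : Plane) :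
    fderiv ℝ (fun y => perp (grad g y)) x w =
      perp (fderiv ℝ (fderiv ℝ g) x w e1, fderiv ℝ (fderiv ℝ g) x w e2) := by
  have hpartial (v : Plane) : DifferentiableAt ℝ (fun y => fderiv ℝ g y v) x := by fun_prop
  have h : HasFDerivAt (fun y => perp (grad g y)) _ x :=
    (hpartial e2).hasFDerivAt.neg.prodMk (hpartial e1).hasFDerivAt
  rw [h.fderiv]
  simp [fderiv_fderiv_apply hg, perp]

lemma contDiff_curl2 {m n : WithTop ℕ∞} (hu : ContDiff ℝ n u) (hmn : m + 1 ≤ n) :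
    ContDiff ℝ m (curl2 u) := by
  have hpartial (v : Plane) : ContDiff ℝ m (fun y => fderiv ℝ u y v) :=
    (hu.fderiv_right hmn).clm_apply contDiff_const
  exact (hpartial e1).snd.sub (hpartial e2).fst

lemma contDiff_perp_grad {m n : WithTop ℕ∞} (hg : ContDiff ℝ n g) (hmn : m + 1 ≤ n) :
    ContDiff ℝ m (fun x => perp (grad g x)) := by
  have hpartial (v : Plane) : ContDiff ℝ m (fun y => fderiv ℝ g y v) :=
    (hg.fderiv_right hmn).clm_apply contDiff_const
  exact (hpartial e2).neg.prodMk (hpartial e1)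

lemma hasCompactSupport_perp_grad (hsupp : HasCompactSupport g) :
    HasCompactSupport (fun x => perp (grad g x)) :=
  (hsupp.fderiv ℝ).comp_left (g := fun L : Plane →L[ℝ] ℝ => perp (L e1, L e2)) (by simp [perp])

lemma diverg_perp_grad (hg : ContDiffAt ℝ 2 g x) : diverg (fun y => perp (grad g y)) x = 0 := by
  have hderiv : DifferentiableAt ℝ (fderiv ℝ g) x :=
    (hg.fderiv_right one_add_one_eq_two.le).differentiableAt one_ne_zero
  have hsymm : fderiv ℝ (fderiv ℝ g) x e1 e2 = fderiv ℝ (fderiv ℝ g) x e2 e1 :=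
    hg.isSymmSndFDerivAt (by simp) e1 e2
  rw [diverg, fderiv_perp_grad_apply hderiv, fderiv_perp_grad_apply hderiv, perp, perp, hsymm,
    neg_add_cancel]

lemma lap_eq_grad_diverg_add_perp_grad_curl2 (hu : ContDiffAt ℝ 2 u x) :
    lap u x = grad (diverg u) x + perp (grad (curl2 u) x) := by
  have hderiv : DifferentiableAt ℝ (fderiv ℝ u) x :=
    (hu.fderiv_right one_add_one_eq_two.le).differentiableAt one_ne_zero
  have hsymm : fderiv ℝ (fderiv ℝ u) x e1 e2 = fderiv ℝ (fderiv ℝ u) x e2 e1 :=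
    hu.isSymmSndFDerivAt (by simp) e1 e2
  simp only [lap, grad, perp, fderiv_fderiv_apply hderiv, fderiv_diverg_apply hderiv,
    fderiv_curl2_apply hderiv, hsymm]
  ext <;> simp only [Prod.fst_add, Prod.snd_add] <;> ring

lemma lap_eq_perp_grad_curl2 (hu : ContDiffAt ℝ 2 u x) (hdiv : ∀ y, diverg u y = 0) :
    lap u x = perp (grad (curl2 u) x) := by
  have hdiverg : diverg u = fun _ => 0 := funext hdiv
  have hgrad : grad (diverg u) x = 0 := by simp [hdiverg, grad]
  rw [lap_eq_grad_diverg_add_perp_grad_curl2 hu, hgrad, zero_add]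

end SecondOrder

lemma dot_advect_self_lap {u : Plane → Plane} (hu : ContDiff ℝ 2 u)
    (hdiv : ∀ x, diverg u x = 0) (x : Plane) :
    dot (advect u u x) (lap u x) =
      dot (u x) (grad (fun y => curl2 u y ^ 2 / 2) x) -
        dot (perp (grad (kineticEnergy u) x)) (grad (curl2 u) x) := by
  rw [lap_eq_perp_grad_curl2 hu.contDiffAt hdiv,
    advect_self_eq_grad_kineticEnergy_add (hu.differentiable two_ne_zero x),
    grad_sq_div_two ((contDiff_curl2 hu one_add_one_eq_two.le).differentiable one_ne_zero x),
    dot_add_left, dot_smul_left, dot_perp_perp, dot_perp_right, dot_smul_right]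
  ring

theorem statement15_general (u : Plane → Plane)
    (hu : ContDiff ℝ 2 u) (hsupp : HasCompactSupport u)
    (hdiv : ∀ x, diverg u x = 0) :
    ∫ x, dot (advect u u x) (lap u x) = 0 := by
  have henergy : ContDiff ℝ 2 (kineticEnergy u) := contDiff_kineticEnergy hu
  have hu_one : ContDiff ℝ 1 u := hu.of_le one_le_two
  have hvort : ContDiff ℝ 1 (curl2 u) := contDiff_curl2 hu one_add_one_eq_two.le
  have henstrophy : ContDiff ℝ 1 (fun y => curl2 u y ^ 2 / 2) := by fun_prop
  have hperp : ContDiff ℝ 1 (fun x => perp (grad (kineticEnergy u) x)) :=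
    contDiff_perp_grad henergy one_add_one_eq_two.le
  have hperp_supp : HasCompactSupport (fun x => perp (grad (kineticEnergy u) x)) :=
    hasCompactSupport_perp_grad (hasCompactSupport_kineticEnergy hsupp)
  simp only [dot_advect_self_lap hu hdiv]
  rw [integral_sub (integrable_dot_grad hu.continuous hsupp henstrophy)
      (integrable_dot_grad hperp.continuous hperp_supp hvort),
    integral_dot_grad_eq_zero hu_one hsupp hdiv henstrophy,
    integral_dot_grad_eq_zero hperp hperp_supp (fun _ => diverg_perp_grad henergy.contDiffAt) hvort,
    sub_zero]

/-- orthogonality relation (2.13), specific to 2D: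
for every divergence-free `u ∈ C_c^∞(ℝ²;ℝ²)`,
`∫ ((u·∇)u) · Δu dx = 0`. -/
theorem statement15 (u : Plane → Plane)
    (hu : ContDiff ℝ (⊤ : ℕ∞) u) (hsupp : HasCompactSupport u)
    (hdiv : ∀ x, diverg u x = 0) :
    ∫ x, dot (advect u u x) (lap u x) = 0 :=
  statement15_general u (hu.of_le (by norm_cast)) hsupp hdiv
end
end

section
/- Let M > 0, K > 1, C > 0, and let E : [0,M] → ℝ be continuous, nonnegative, satisfy E(t) < K for all t ∈ [0,M], be differentiable on (0,M), and satisfy E(0) = 0 together with the differential inequality E′(t) ≤ C · E(t) · ln(K/E(t)) at every t ∈ (0,M) with E(t) > 0. Then E(t) = 0 for all t ∈ [0,M]. -/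
open Real Set

/-!
Let `Φ` be a primitive of `1 / ω`, where `ω r = r * log (K / r)`; explicitly
`Φ r = -log (log (K / r))`, which tends to `-∞` as `r → 0⁺`. Where `E` is small and positive, the
differential inequality says `(Φ ∘ E)' ≤ C`. If `E` were positive somewhere, then `Φ ∘ E` would
have to rise from `-∞` immediately after the last zero of `E` before that point, which a function
with derivative bounded above cannot do.
-/

open Filter Topology

theorem exists_mem_Ico_eq_and_forall_Ioc_lt {α β : Type*} [ConditionallyCompleteLinearOrder α]
    [TopologicalSpace α] [OrderTopology α] [DenselyOrdered α] [LinearOrder β]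
    [TopologicalSpace β] [OrderClosedTopology β] {f : α → β} {a b : α} {c : β}
    (hab : a ≤ b) (hf : ContinuousOn f (Icc a b)) (ha : f a ≤ c) (hb : c < f b) :
    ∃ s ∈ Ico a b, f s = c ∧ ∀ t ∈ Ioc s b, c < f t := by
  have hcompact : IsCompact (Icc a b ∩ f ⁻¹' Iic c) :=
    isCompact_Icc.of_isClosed_subset (hf.preimage_isClosed_of_isClosed isClosed_Icc isClosed_Iic)
      inter_subset_left
  obtain ⟨s, ⟨hs, hfs : f s ≤ c⟩, hmax⟩ := hcompact.exists_isGreatest ⟨a, left_mem_Icc.2 hab, ha⟩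
  have hsb : s < b := hs.2.lt_of_ne fun h => hfs.not_gt (h ▸ hb)
  have hlt : ∀ t ∈ Ioc s b, c < f t := fun t ht =>
    not_le.1 fun hft => ht.1.not_ge (hmax ⟨⟨hs.1.trans ht.1.le, ht.2⟩, hft⟩)
  have hlim : ContinuousWithinAt f (Ioc s b) s :=
    (hf s hs).mono fun t ht => ⟨hs.1.trans ht.1.le, ht.2⟩
  have : (𝓝[Ioc s b] s).NeBot := left_nhdsWithin_Ioc_neBot hsb
  have hge : c ≤ f s :=
    ge_of_tendsto hlim (eventually_of_mem self_mem_nhdsWithin fun t ht => (hlt t ht).le)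
  exact ⟨s, ⟨hs.1, hsb⟩, hfs.antisymm hge, hlt⟩

theorem not_tendsto_atBot_nhdsGT_of_deriv_le {g : ℝ → ℝ} {s C : ℝ}
    (hg : ∀ᶠ t in 𝓝[>] s, DifferentiableAt ℝ g t ∧ deriv g t ≤ C) :
    ¬ Tendsto g (𝓝[>] s) atBot := by
  intro hbot
  obtain ⟨b, hsb : s < b, hb⟩ := mem_nhdsGT_iff_exists_Ioc_subset.1 hg
  have hbound : ∀ t ∈ Ioc s b, g b - g t ≤ C * (b - t) := fun t ht =>
    (convex_Ioc s b).image_sub_le_mul_sub_of_deriv_le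
      (fun x hx => (hb hx).1.continuousAt.continuousWithinAt)
      (fun x hx => (hb (interior_subset hx)).1.differentiableWithinAt)
      (fun x hx => (hb (interior_subset hx)).2) t ht b (right_mem_Ioc.2 hsb) ht.2
  have hlim : Tendsto (fun t => g b - C * (b - t)) (𝓝[>] s) (𝓝 (g b - C * (b - s))) :=
    (Continuous.tendsto (by fun_prop) s).mono_left nhdsWithin_le_nhds
  have hle : ∀ᶠ t in 𝓝[>] s, g b - C * (b - t) ≤ g t := by
    filter_upwards [Ioc_mem_nhdsGT hsb] with t ht
    linarith [hbound t ht]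
  exact not_tendsto_nhds_of_tendsto_atBot (tendsto_atBot_mono' _ hle hbot) _ hlim

/-- `Φ` witnesses the Osgood condition `∫₀ dr / ω r = ∞` for the modulus `ω`: near `0⁺` it is a
primitive of `1 / ω`, and it tends to `-∞` there. Only the germs of `ω` and `Φ` at `0⁺` matter. -/
structure IsOsgoodPrimitive (ω Φ : ℝ → ℝ) : Prop where
  eventually_pos : ∀ᶠ r in 𝓝[>] 0, 0 < ω r
  eventually_hasDerivAt : ∀ᶠ r in 𝓝[>] 0, HasDerivAt Φ (ω r)⁻¹ r
  tendsto_atBot : Tendsto Φ (𝓝[>] 0) atBot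

namespace IsOsgoodPrimitive

variable {ω Φ f : ℝ → ℝ} {C : ℝ}

theorem not_tendsto_nhdsGT_zero {s : ℝ} (hΦ : IsOsgoodPrimitive ω Φ)
    (hf : ∀ᶠ t in 𝓝[>] s, DifferentiableAt ℝ f t ∧ deriv f t ≤ C * ω (f t)) :
    ¬ Tendsto f (𝓝[>] s) (𝓝[>] 0) := by
  intro hlim
  refine not_tendsto_atBot_nhdsGT_of_deriv_le (g := Φ ∘ f) (C := C) ?_
    (hΦ.tendsto_atBot.comp hlim)
  filter_upwards [hf, hlim.eventually hΦ.eventually_pos,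
    hlim.eventually hΦ.eventually_hasDerivAt] with t ⟨hdiff, hle⟩ hpos hderiv
  have hcomp : HasDerivAt (Φ ∘ f) ((ω (f t))⁻¹ * deriv f t) t := hderiv.comp t hdiff.hasDerivAt
  refine ⟨hcomp.differentiableAt, ?_⟩
  rw [hcomp.deriv]
  exact (inv_mul_le_iff₀' hpos).2 hle

theorem nonpos_of_deriv_le {a b : ℝ} (hΦ : IsOsgoodPrimitive ω Φ)
    (hcont : ContinuousOn f (Icc a b)) (ha : f a ≤ 0)
    (hdiff : ∀ t ∈ Ioo a b, 0 < f t → DifferentiableAt ℝ f t)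
    (hderiv : ∀ t ∈ Ioo a b, 0 < f t → deriv f t ≤ C * ω (f t)) :
    ∀ t ∈ Icc a b, f t ≤ 0 := by
  intro t ht
  by_contra! hpos
  obtain ⟨s, hs, hfs, hpos_after⟩ :=
    exists_mem_Ico_eq_and_forall_Ioc_lt ht.1 (hcont.mono (Icc_subset_Icc_right ht.2)) ha hpos
  have hnear : ∀ᶠ x in 𝓝[>] s, x ∈ Ioo s t := Ioo_mem_nhdsGT hs.2
  have hlim : Tendsto f (𝓝[>] s) (𝓝 0) := by
    rw [← hfs, ← nhdsWithin_Ioo_eq_nhdsGT hs.2]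
    exact (hcont s ⟨hs.1, hs.2.le.trans ht.2⟩).mono fun x hx =>
      ⟨hs.1.trans hx.1.le, hx.2.le.trans ht.2⟩
  refine hΦ.not_tendsto_nhdsGT_zero (C := C) ?_ (tendsto_nhdsWithin_iff.2 ⟨hlim, ?_⟩)
  · filter_upwards [hnear] with x hx
    have hx' : x ∈ Ioo a b := ⟨hs.1.trans_lt hx.1, hx.2.trans_le ht.2⟩
    have hfx : 0 < f x := hpos_after x ⟨hx.1, hx.2.le⟩
    exact ⟨hdiff x hx' hfx, hderiv x hx' hfx⟩
  · filter_upwards [hnear] with x hx using hpos_after x ⟨hx.1, hx.2.le⟩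

end IsOsgoodPrimitive

theorem hasDerivAt_neg_log_log_const_div {K r : ℝ} (hr : 0 < r) (hrK : r < K) :
    HasDerivAt (fun x => -log (log (K / x))) (r * log (K / r))⁻¹ r := by
  have hK : 0 < K := hr.trans hrK
  have hlog : 0 < log (K / r) := log_pos ((one_lt_div hr).2 hrK)
  have hdiv : HasDerivAt (fun x => K / x) (K * -(r ^ 2)⁻¹) r := (hasDerivAt_inv hr.ne').const_mul K
  refine ((hdiv.log (div_pos hK hr).ne').log hlog.ne').neg.congr_deriv ?_
  field_simp

theorem isOsgoodPrimitive_mul_log_const_div {K : ℝ} (hK : 0 < K) :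
    IsOsgoodPrimitive (fun r => r * log (K / r)) (fun r => -log (log (K / r))) where
  eventually_pos := by
    filter_upwards [Ioo_mem_nhdsGT hK] with r hr
    exact mul_pos hr.1 (log_pos ((one_lt_div hr.1).2 hr.2))
  eventually_hasDerivAt := by
    filter_upwards [Ioo_mem_nhdsGT hK] with r hr
    exact hasDerivAt_neg_log_log_const_div hr.1 hr.2
  tendsto_atBot := by
    have hdiv : Tendsto (fun r => K / r) (𝓝[>] 0) atTop :=
      tendsto_inv_nhdsGT_zero.const_mul_atTop hK
    exact tendsto_neg_atTop_atBot.comp (tendsto_log_atTop.comp (tendsto_log_atTop.comp hdiv))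

theorem statement18_general {a b K C : ℝ} (hK : 0 < K) {E : ℝ → ℝ}
    (hcont : ContinuousOn E (Icc a b)) (ha : E a ≤ 0)
    (hdiff : ∀ t ∈ Ioo a b, 0 < E t → DifferentiableAt ℝ E t)
    (hineq : ∀ t ∈ Ioo a b, 0 < E t → deriv E t ≤ C * E t * log (K / E t)) :
    ∀ t ∈ Icc a b, E t ≤ 0 :=
  (isOsgoodPrimitive_mul_log_const_div hK).nonpos_of_deriv_le hcont ha hdiff
    fun t ht hpos => (hineq t ht hpos).trans_eq (mul_assoc _ _ _)

/-- Osgood-type uniqueness lemma underlying the Yudovich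
argument.  Let `M > 0`, `K > 1`, `C > 0`, and let `E : [0,M] → ℝ` be
continuous, nonnegative, satisfy `E(t) < K` on `[0,M]`, be differentiable on
`(0,M)`, with `E(0) = 0` and `E′(t) ≤ C·E(t)·ln(K/E(t))` at every point of
`(0,M)` where `E(t) > 0`.  Then `E ≡ 0` on `[0,M]`. -/
theorem statement18 (M K C : ℝ) (hM : 0 < M) (hK : 1 < K) (hC : 0 < C)
    (E : ℝ → ℝ)
    (hcont : ContinuousOn E (Set.Icc 0 M))
    (hnonneg : ∀ t ∈ Set.Icc (0 : ℝ) M, 0 ≤ E t)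
    (hlt : ∀ t ∈ Set.Icc (0 : ℝ) M, E t < K)
    (hdiff : ∀ t ∈ Set.Ioo (0 : ℝ) M, DifferentiableAt ℝ E t)
    (h0 : E 0 = 0)
    (hineq : ∀ t ∈ Set.Ioo (0 : ℝ) M, 0 < E t →
      deriv E t ≤ C * E t * Real.log (K / E t)) :
    ∀ t ∈ Set.Icc (0 : ℝ) M, E t = 0 := by
  intro t ht
  exact (statement18_general (zero_lt_one.trans hK) hcont h0.le (fun s hs _ => hdiff s hs)
    hineq t ht).antisymm (hnonneg t ht)
end

section
/- There exists a constant c > 0 such that for every p ∈ (1,∞) and every u ∈ C_c^∞(ℝ²;ℝ²) with div u = ∂₁u¹ + ∂₂u² = 0 on ℝ², one has ‖∇u‖_{L^p(ℝ²)} ≤ c · (p²/(p−1)) · ‖curl u‖_{L^p(ℝ²)}, where curl u = ∂₁u² − ∂₂u¹. -/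
open MeasureTheory Real Set Filter

noncomputable section

/-!
Let `f ∗ heatKernel t` be the heat flow of `f`. If `Δh = ∂ᵢ∂ₖω`, then the pairing
`∫ (h ∗ heatKernel t) (g ∗ heatKernel t)` tends to `∫ h g` as `t → 0` and to `0` as `t → ∞`, and
integrating by parts turns its time derivative into
`-2 ∫ ∂ᵢ(ω ∗ heatKernel t) ∂ₖ(g ∗ heatKernel t)`. The Bellman function method of Nazarov and Volberg
bounds the time integral of the absolute value of this product when `ω` and `g` are positive (their
positive and negative parts may be treated separately): for conjugate exponents `p ≥ 2` and `q`
there is a function `0 ≤ B(x, y) ≤ x ^ p + 5 p y ^ q` on the positive quadrant whose Hessian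
dominates `2 |dx| |dy|`, and along the heat flows `∫ B` decreases exactly at the rate given by this
Hessian, evaluated on the spatial derivatives. Duality then gives `‖h‖_p ≲ p q ‖ω‖_p`, where
`p q = p² / (p - 1)`. For a divergence-free `u`, `Δ(∂ᵢuʲ) = ± ∂ᵢ∂ₖ(curl u)` with `k ≠ j`, so this
estimate applies to each entry of `∇u`.
-/

open scoped Topology

/-! ### The Bellman function -/

section Bellman

/-- The quantity `S = u ^ p + v ^ q` in which the Bellman function is homogeneous of degree one. -/
def bellmanSum (p q u v : ℝ) : ℝ := u ^ p + v ^ q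

/-- The scale-invariant quantity `τ = u² S ^ (-2 / p)`. -/
def bellmanScale (p q u v : ℝ) : ℝ := u ^ 2 * bellmanSum p q u v ^ (-2 / p)

/-- The share `y = v ^ q / S` of the second variable in `S`. -/
def bellmanShare (p q u v : ℝ) : ℝ := v ^ q / bellmanSum p q u v

/-- The Bellman function `u² S ^ (1 - 2 / p) + (5 p - 1) v ^ q`, written as `S (τ + (5 p - 1) y)`.
Its Hessian dominates the form `2 |du dv|`, see `two_mul_abs_mul_le_sum_bellmanHess`. -/
def bellman (p q u v : ℝ) : ℝ :=
  bellmanSum p q u v * (bellmanScale p q u v + (5 * p - 1) * bellmanShare p q u v)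

/-- The differential of the Bellman function in logarithmic coordinates: its value at the tangent
vector `(α u, β v)`. -/
def bellmanGrad (p q u v α β : ℝ) : ℝ :=
  let τ := bellmanScale p q u v
  let y := bellmanShare p q u v
  bellmanSum p q u v * (τ * (p - (p - 2) * y) * α + y * ((2 - q) * τ + (5 * p - 1) * q) * β)

/-- The second differential of the Bellman function in logarithmic coordinates: its value at the
tangent vector `(α u, β v)`. -/
def bellmanHess (p q u v α β : ℝ) : ℝ :=
  let τ := bellmanScale p q u v
  let y := bellmanShare p q u v
  bellmanSum p q u v *
    (τ * (2 + (p - 2) * (1 - y) * (p + 1 + 2 * y)) * α ^ 2 +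
      4 * (2 - q) * τ * y ^ 2 * (α * β) +
      y * ((q - 1) * (2 - q) * τ * (1 - 2 * y) + (5 * p - 1) * (q - 1) * q) * β ^ 2)

variable {p q u v : ℝ}

lemma bellmanSum_pos (hu : 0 < u) (hv : 0 < v) : 0 < bellmanSum p q u v := by
  unfold bellmanSum; positivity

lemma bellmanScale_pos (hu : 0 < u) (hv : 0 < v) : 0 < bellmanScale p q u v := by
  have := bellmanSum_pos (p := p) (q := q) hu hv
  unfold bellmanScale; positivity

lemma bellmanShare_pos (hu : 0 < u) (hv : 0 < v) : 0 < bellmanShare p q u v := by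
  have := bellmanSum_pos (p := p) (q := q) hu hv
  unfold bellmanShare; positivity

lemma bellmanSum_mul_share (hu : 0 < u) (hv : 0 < v) :
    bellmanSum p q u v * bellmanShare p q u v = v ^ q :=
  mul_div_cancel₀ _ (bellmanSum_pos hu hv).ne'

lemma bellmanSum_mul_one_sub_share (hu : 0 < u) (hv : 0 < v) :
    bellmanSum p q u v * (1 - bellmanShare p q u v) = u ^ p := by
  rw [mul_sub, mul_one, bellmanSum_mul_share hu hv, bellmanSum, add_sub_cancel_right]

lemma bellmanShare_le_one (hu : 0 < u) (hv : 0 < v) : bellmanShare p q u v ≤ 1 := by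
  refine (div_le_one (bellmanSum_pos hu hv)).2 ?_
  unfold bellmanSum
  linarith [rpow_pos_of_pos hu p]

lemma bellmanScale_le_one (hp : 0 < p) (hu : 0 < u) (hv : 0 < v) :
    bellmanScale p q u v ≤ 1 := by
  have hS := bellmanSum_pos (p := p) (q := q) hu hv
  have hle : u ^ p ≤ bellmanSum p q u v := le_add_of_nonneg_right (rpow_pos_of_pos hv q).le
  calc bellmanScale p q u v
      = (u ^ p) ^ (2 / p) * bellmanSum p q u v ^ (-2 / p) := by
        rw [← rpow_mul hu.le, mul_div_cancel₀ _ hp.ne', rpow_two, bellmanScale]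
    _ ≤ bellmanSum p q u v ^ (2 / p) * bellmanSum p q u v ^ (-2 / p) := by gcongr
    _ = 1 := by rw [← rpow_add hS, neg_div, add_neg_cancel, rpow_zero]

lemma bellman_nonneg (hp : 1 ≤ p) (hu : 0 < u) (hv : 0 < v) : 0 ≤ bellman p q u v := by
  have := bellmanSum_pos (p := p) (q := q) hu hv
  have := bellmanScale_pos (p := p) (q := q) hu hv
  have := bellmanShare_pos (p := p) (q := q) hu hv
  have : 0 ≤ 5 * p - 1 := by linarith
  unfold bellman; positivity

lemma bellman_le (hp : 0 < p) (hu : 0 < u) (hv : 0 < v) :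
    bellman p q u v ≤ u ^ p + 5 * p * v ^ q := by
  have hτ := bellmanScale_le_one (q := q) hp hu hv
  calc bellman p q u v
      ≤ bellmanSum p q u v * (1 + (5 * p - 1) * bellmanShare p q u v) := by
        unfold bellman
        have := (bellmanSum_pos (p := p) (q := q) hu hv).le
        gcongr
    _ = bellmanSum p q u v * (1 - bellmanShare p q u v) +
          5 * p * (bellmanSum p q u v * bellmanShare p q u v) := by ring
    _ = u ^ p + 5 * p * v ^ q := by
        rw [bellmanSum_mul_share hu hv, bellmanSum_mul_one_sub_share hu hv]

/-! ### The Bellman function along a curve -/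

lemma hasDerivAt_rpow_log {w : ℝ → ℝ} {a s : ℝ} (hw : HasDerivAt w a s) (h0 : 0 < w s) (r : ℝ) :
    HasDerivAt (fun s => w s ^ r) (w s ^ r * (r * (a / w s))) s := by
  convert! hw.rpow_const (p := r) (Or.inl h0.ne') using 1
  rw [rpow_sub_one h0.ne']
  ring

section Curve

variable {w z : ℝ → ℝ} {a b s : ℝ} (hw : HasDerivAt w a s) (hz : HasDerivAt z b s)
  (hw0 : 0 < w s) (hz0 : 0 < z s)

include hw hz hw0 hz0

lemma hasDerivAt_bellmanSum (hpq : p.HolderConjugate q) :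
    HasDerivAt (fun s => bellmanSum p q (w s) (z s))
      (bellmanSum p q (w s) (z s) * (p * ((1 - bellmanShare p q (w s) (z s)) * (a / w s) +
        (q - 1) * bellmanShare p q (w s) (z s) * (b / z s)))) s := by
  convert! (hasDerivAt_rpow_log hw hw0 p).add (hasDerivAt_rpow_log hz hz0 q) using 1
  rw [← bellmanSum_mul_share (p := p) (q := q) hw0 hz0,
    ← bellmanSum_mul_one_sub_share (p := p) (q := q) hw0 hz0]
  linear_combination bellmanSum p q (w s) (z s) * bellmanShare p q (w s) (z s) * (b / z s) *
    hpq.symm.sub_one_mul_conj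

lemma hasDerivAt_bellmanScale (hpq : p.HolderConjugate q) :
    HasDerivAt (fun s => bellmanScale p q (w s) (z s))
      (2 * bellmanShare p q (w s) (z s) * bellmanScale p q (w s) (z s) *
        (a / w s - (q - 1) * (b / z s))) s := by
  have hS := bellmanSum_pos (p := p) (q := q) hw0 hz0
  convert! (hw.pow 2).mul
    (hasDerivAt_rpow_log (hasDerivAt_bellmanSum hw hz hw0 hz0 hpq) hS (-2 / p)) using 1
  rw [mul_div_cancel_left₀ _ hS.ne', bellmanScale]
  have := hpq.ne_zero
  simp only [Pi.pow_apply]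
  field_simp
  ring

lemma hasDerivAt_bellmanShare (hpq : p.HolderConjugate q) :
    HasDerivAt (fun s => bellmanShare p q (w s) (z s))
      (p * bellmanShare p q (w s) (z s) * (1 - bellmanShare p q (w s) (z s)) *
        ((q - 1) * (b / z s) - a / w s)) s := by
  have hS := bellmanSum_pos (p := p) (q := q) hw0 hz0
  convert! (hasDerivAt_rpow_log hz hz0 q).div
    (hasDerivAt_bellmanSum hw hz hw0 hz0 hpq) hS.ne' using 1
  rw [← bellmanSum_mul_share (p := p) (q := q) hw0 hz0]
  field_simp
  linear_combination bellmanShare p q (w s) (z s) * w s * b * hpq.symm.sub_one_mul_conj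

theorem hasDerivAt_bellman (hpq : p.HolderConjugate q) :
    HasDerivAt (fun s => bellman p q (w s) (z s))
      (bellmanGrad p q (w s) (z s) (a / w s) (b / z s)) s := by
  convert! (hasDerivAt_bellmanSum hw hz hw0 hz0 hpq).mul
    ((hasDerivAt_bellmanScale hw hz hw0 hz0 hpq).add
      ((hasDerivAt_bellmanShare hw hz hw0 hz0 hpq).const_mul (5 * p - 1))) using 1
  simp only [bellmanGrad, Pi.add_apply]
  set S := bellmanSum p q (w s) (z s)
  set τ := bellmanScale p q (w s) (z s)
  set y := bellmanShare p q (w s) (z s)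
  linear_combination -S * y * (τ + 5 * p - 1) * (b / z s) * hpq.symm.sub_one_mul_conj

/-- Since `z ↦ z' / z` contributes `- (z' / z) ^ 2` to the second derivative, the form
`bellmanHess` is the Hessian of `bellman` and not that of `bellman` in logarithmic coordinates. -/
theorem hasDerivAt_bellmanGrad (hpq : p.HolderConjugate q) {w' z' : ℝ → ℝ} {a' b' : ℝ}
    (hw' : w' s = a) (hz' : z' s = b) (hdw : HasDerivAt w' a' s) (hdz : HasDerivAt z' b' s) :
    HasDerivAt (fun s => bellmanGrad p q (w s) (z s) (w' s / w s) (z' s / z s))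
      (bellmanGrad p q (w s) (z s) (a' / w s) (b' / z s) +
        bellmanHess p q (w s) (z s) (a / w s) (b / z s)) s := by
  have dS := hasDerivAt_bellmanSum hw hz hw0 hz0 hpq
  have dτ := hasDerivAt_bellmanScale hw hz hw0 hz0 hpq
  have dy := hasDerivAt_bellmanShare hw hz hw0 hz0 hpq
  convert! dS.mul (((dτ.mul ((dy.const_mul (p - 2)).const_sub p)).mul (hdw.div hw hw0.ne')).add
    ((dy.mul ((dτ.const_mul (2 - q)).add_const ((5 * p - 1) * q))).mul
      (hdz.div hz hz0.ne'))) using 1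
  simp only [bellmanGrad, bellmanHess, Pi.mul_apply, Pi.div_apply, Pi.add_apply, hw', hz']
  set S := bellmanSum p q (w s) (z s)
  set τ := bellmanScale p q (w s) (z s)
  set y := bellmanShare p q (w s) (z s)
  set α := a / w s with hα
  set β := b / z s with hβ
  have hw2 : (a' * w s - a * a) / w s ^ 2 = a' / w s - α ^ 2 := by rw [hα]; field_simp
  have hz2 : (b' * z s - b * b) / z s ^ 2 = b' / z s - β ^ 2 := by rw [hβ]; field_simp
  rw [hw2, hz2]
  linear_combination -S * (2 * τ * y ^ 2 * α * β + y * ((2 - q) * τ + (5 * p - 1) * q) * β ^ 2) *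
    hpq.symm.sub_one_mul_conj

end Curve

/-! ### Convexity of the Bellman function -/

lemma sq_mul_sq_le_bellmanSum_sq (hp : 2 ≤ p) (hpq : p.HolderConjugate q) (hu : 0 < u)
    (hv : 0 < v) :
    u ^ 2 * v ^ 2 ≤
      bellmanSum p q u v ^ 2 * (bellmanScale p q u v * bellmanShare p q u v) := by
  have hS := bellmanSum_pos (p := p) (q := q) hu hv
  have hle : v ^ q ≤ bellmanSum p q u v := le_add_of_nonneg_left (rpow_pos_of_pos hu p).le
  have hv2 : v ^ 2 = v ^ q * (v ^ q) ^ (1 - 2 / p) := by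
    rw [← rpow_two, ← rpow_mul hv.le, ← rpow_add hv]
    congr 1
    field_simp [hpq.ne_zero]
    linear_combination -2 * hpq.mul_eq_add
  have hexp : 0 ≤ 1 - 2 / p := sub_nonneg.2 ((div_le_one hpq.pos).2 hp)
  calc u ^ 2 * v ^ 2
      ≤ u ^ 2 * (v ^ q * bellmanSum p q u v ^ (1 - 2 / p)) := by rw [hv2]; gcongr
    _ = _ := by
        rw [← bellmanSum_mul_share (p := p) hu hv, bellmanScale, sub_eq_add_neg, ← neg_div,
          rpow_add hS, rpow_one]
        ring

lemma add_le_bellmanHess (hp : 2 ≤ p) (hpq : p.HolderConjugate q) (hu : 0 < u) (hv : 0 < v)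
    (α β : ℝ) :
    bellmanSum p q u v * (bellmanScale p q u v * α ^ 2 + bellmanShare p q u v * β ^ 2) ≤
      bellmanHess p q u v α β := by
  have hS := bellmanSum_pos (p := p) (q := q) hu hv
  have hτ0 := bellmanScale_pos (p := p) (q := q) hu hv
  have hτ1 := bellmanScale_le_one (q := q) hpq.pos hu hv
  have hy0 := bellmanShare_pos (p := p) (q := q) hu hv
  have hy1 := bellmanShare_le_one (p := p) (q := q) hu hv
  have hq1 : 1 < q := hpq.symm.lt
  have hq2 : q ≤ 2 := by nlinarith [hpq.mul_eq_add]
  unfold bellmanHess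
  generalize bellmanScale p q u v = τ at *
  generalize bellmanShare p q u v = y at *
  refine mul_le_mul_of_nonneg_left ?_ hS.le
  have huu : 2 * τ * α ^ 2 ≤ τ * (2 + (p - 2) * (1 - y) * (p + 1 + 2 * y)) * α ^ 2 := by
    have : 0 ≤ (p - 2) * (1 - y) * (p + 1 + 2 * y) :=
      mul_nonneg (mul_nonneg (by linarith) (by linarith)) (by linarith)
    rw [mul_comm 2 τ]
    gcongr
    linarith
  have huv : -(τ * α ^ 2 + 4 * y * β ^ 2) ≤ 4 * (2 - q) * τ * y ^ 2 * (α * β) := by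
    have hβ : (2 - q) ^ 2 * τ * y ^ 4 * β ^ 2 ≤ y * β ^ 2 := by
      have h1 : (2 - q) ^ 2 ≤ 1 := by nlinarith
      have h2 : y ^ 4 ≤ y := pow_le_of_le_one hy0.le hy1 (by norm_num)
      calc (2 - q) ^ 2 * τ * y ^ 4 * β ^ 2 ≤ 1 * 1 * y * β ^ 2 := by gcongr
        _ = y * β ^ 2 := by ring
    linarith [mul_nonneg hτ0.le (sq_nonneg (α + 2 * (2 - q) * y ^ 2 * β))]
  have hvv : 5 * y * β ^ 2 ≤
      y * ((q - 1) * (2 - q) * τ * (1 - 2 * y) + (5 * p - 1) * (q - 1) * q) * β ^ 2 := by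
    have : 5 ≤ (q - 1) * (2 - q) * τ * (1 - 2 * y) + (5 * p - 1) * (q - 1) * q := by
      have h1 : -1 ≤ τ * (1 - 2 * y) := by nlinarith
      have h2 : 0 ≤ (q - 1) * (2 - q) := mul_nonneg (by linarith) (by linarith)
      have h3 : (5 * p - 1) * (q - 1) = 4 * q + 1 := by linear_combination 5 * hpq.mul_eq_add
      rw [h3, mul_assoc]
      nlinarith
    rw [mul_comm 5 y]
    gcongr
  linarith

/-- By AM-GM `τ α² + y β² ≥ 2 √(τ y) |α β|`, and `S √(τ y) ≥ u v`. -/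
lemma two_mul_abs_mul_le_bellmanSum_mul (hp : 2 ≤ p) (hpq : p.HolderConjugate q) (hu : 0 < u)
    (hv : 0 < v) (a b : ℝ) :
    2 * |a * b| ≤ bellmanSum p q u v *
      (bellmanScale p q u v * (a / u) ^ 2 + bellmanShare p q u v * (b / v) ^ 2) := by
  have hS := bellmanSum_pos (p := p) (q := q) hu hv
  have hτ0 := bellmanScale_pos (p := p) (q := q) hu hv
  have hy0 := bellmanShare_pos (p := p) (q := q) hu hv
  have huv := sq_mul_sq_le_bellmanSum_sq hp hpq hu hv
  set S := bellmanSum p q u v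
  set τ := bellmanScale p q u v
  set y := bellmanShare p q u v
  obtain ⟨α, rfl⟩ : ∃ α, a = u * α := ⟨a / u, (mul_div_cancel₀ a hu.ne').symm⟩
  obtain ⟨β, rfl⟩ : ∃ β, b = v * β := ⟨b / v, (mul_div_cancel₀ b hv.ne').symm⟩
  rw [mul_div_cancel_left₀ _ hu.ne', mul_div_cancel_left₀ _ hv.ne']
  refine le_of_sq_le_sq ?_ (by positivity)
  calc (2 * |u * α * (v * β)|) ^ 2 = 4 * (u ^ 2 * v ^ 2) * (α ^ 2 * β ^ 2) := by
        rw [mul_pow, sq_abs]; ring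
    _ ≤ 4 * (S ^ 2 * (τ * y)) * (α ^ 2 * β ^ 2) := by gcongr
    _ ≤ (S * (τ * α ^ 2 + y * β ^ 2)) ^ 2 := by
        nlinarith [mul_nonneg (sq_nonneg S) (sq_nonneg (τ * α ^ 2 - y * β ^ 2))]

/-- The two directions `i` and `k` may differ because the quadratic form to which `bellmanHess` is
compared is diagonal. -/
theorem two_mul_abs_mul_le_sum_bellmanHess (hp : 2 ≤ p) (hpq : p.HolderConjugate q) (hu : 0 < u)
    (hv : 0 < v) {ι : Type*} [Fintype ι] (a b : ι → ℝ) (i k : ι) :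
    2 * |a i * b k| ≤ ∑ j, bellmanHess p q u v (a j / u) (b j / v) := by
  have hS := bellmanSum_pos (p := p) (q := q) hu hv
  have hτ := bellmanScale_pos (p := p) (q := q) hu hv
  have hy := bellmanShare_pos (p := p) (q := q) hu hv
  have hsingle (c : ι → ℝ) (j : ι) : c j ^ 2 ≤ ∑ j, c j ^ 2 :=
    Finset.single_le_sum (fun j _ => sq_nonneg (c j)) (Finset.mem_univ j)
  calc 2 * |a i * b k|
      ≤ bellmanSum p q u v *
          (bellmanScale p q u v * (a i / u) ^ 2 + bellmanShare p q u v * (b k / v) ^ 2) :=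
        two_mul_abs_mul_le_bellmanSum_mul hp hpq hu hv _ _
    _ ≤ bellmanSum p q u v * (bellmanScale p q u v * ∑ j, (a j / u) ^ 2 +
          bellmanShare p q u v * ∑ j, (b j / v) ^ 2) := by
        gcongr
        exacts [hsingle (fun j => a j / u) i, hsingle (fun j => b j / v) k]
    _ = ∑ j, bellmanSum p q u v *
          (bellmanScale p q u v * (a j / u) ^ 2 + bellmanShare p q u v * (b j / v) ^ 2) := by
        simp only [Finset.mul_sum, ← Finset.sum_add_distrib]
    _ ≤ _ := Finset.sum_le_sum fun j _ => add_le_bellmanHess hp hpq hu hv _ _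

end Bellman

/-! ### Coordinates of the plane -/

/-- The standard basis of the plane, indexed so that Laplacians are sums over `Fin 2`. -/
def dir : Fin 2 → Plane := ![e1, e2]

/-- The coordinate functions dual to `dir`. -/
def coord : Fin 2 → Plane → ℝ := ![Prod.fst, Prod.snd]

lemma nsq_nonneg (x : Plane) : 0 ≤ nsq x := by unfold nsq; positivity

@[fun_prop]
lemma continuous_nsq : Continuous nsq := by unfold nsq; fun_prop

@[fun_prop]
lemma continuous_coord (i : Fin 2) : Continuous (coord i) := by
  fin_cases i
  exacts [continuous_fst, continuous_snd]

lemma sum_coord_sq (x : Plane) : ∑ i, coord i x ^ 2 = nsq x := Fin.sum_univ_two _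

lemma coord_sq_le_nsq (i : Fin 2) (x : Plane) : coord i x ^ 2 ≤ nsq x := by
  rw [← sum_coord_sq]
  exact Finset.single_le_sum (fun j _ => sq_nonneg (coord j x)) (Finset.mem_univ i)

lemma nsq_add_smul_dir (i : Fin 2) (x : Plane) (s : ℝ) :
    nsq (x + s • dir i) = nsq x + 2 * s * coord i x + s ^ 2 := by
  fin_cases i <;> simp [nsq, dir, coord, e1, e2] <;> ring

lemma coord_add_smul_dir (i : Fin 2) (x : Plane) (s : ℝ) :
    coord i (x + s • dir i) = coord i x + s := by
  fin_cases i <;> simp [dir, coord, e1, e2]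

lemma nsq_neg (x : Plane) : nsq (-x) = nsq x := by simp [nsq]

lemma nsq_add_le (x y : Plane) : nsq (x + y) ≤ 2 * nsq x + 2 * nsq y := by
  simp only [nsq, Prod.fst_add, Prod.snd_add]
  nlinarith [sq_nonneg (x.1 - y.1), sq_nonneg (x.2 - y.2)]

lemma exists_nsq_le_of_hasCompactSupport {f : Plane → ℝ} (hf : HasCompactSupport f) :
    ∃ R, 0 ≤ R ∧ ∀ x, f x ≠ 0 → nsq x ≤ R := by
  obtain ⟨R, hR⟩ := hf.bddAbove_image continuous_nsq.continuousOn
  exact ⟨max R 0, le_max_right _ _, fun x hx =>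
    (hR ⟨x, subset_tsupport f hx, rfl⟩).trans (le_max_left _ _)⟩

/-! ### Gaussian decay and polynomial growth -/

lemma integrable_exp_neg_mul_nsq {c : ℝ} (hc : 0 < c) :
    Integrable fun x : Plane => exp (-c * nsq x) := by
  simp only [nsq, mul_add, exp_add]
  exact (integrable_exp_neg_mul_sq hc).mul_prod (integrable_exp_neg_mul_sq hc)

lemma integral_exp_neg_mul_nsq (c : ℝ) : ∫ x : Plane, exp (-c * nsq x) = √(π / c) ^ 2 := by
  simp only [nsq, mul_add, exp_add]
  rw [← integral_gaussian, sq]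
  exact integral_prod_mul (fun s : ℝ => exp (-c * s ^ 2)) fun s : ℝ => exp (-c * s ^ 2)

lemma one_add_pow_mul_exp_le {c : ℝ} (hc : 0 < c) (N : ℕ) :
    ∃ C, ∀ s, 0 ≤ s → (1 + s) ^ N * exp (-c * s) ≤ C * exp (-(c / 2) * s) := by
  set δ := c / (2 * (N + 1)) with hδ
  have hδ0 : 0 < δ := by positivity
  refine ⟨(1 + δ⁻¹) ^ N, fun s hs => ?_⟩
  have hlin : 1 + s ≤ (1 + δ⁻¹) * exp (δ * s) := by
    have h1 := one_le_exp (mul_nonneg hδ0.le hs)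
    have h2 := mul_le_mul_of_nonneg_left (add_one_le_exp (δ * s)) (inv_pos.2 hδ0).le
    rw [mul_add, inv_mul_cancel_left₀ hδ0.ne'] at h2
    nlinarith [inv_pos.2 hδ0]
  have hexp : N * (δ * s) + -c * s ≤ -(c / 2) * s := by
    have : N * δ ≤ c / 2 := by rw [hδ]; field_simp; linarith
    nlinarith
  calc (1 + s) ^ N * exp (-c * s)
      ≤ ((1 + δ⁻¹) * exp (δ * s)) ^ N * exp (-c * s) := by gcongr
    _ = (1 + δ⁻¹) ^ N * exp (N * (δ * s) + -c * s) := by rw [mul_pow, ← exp_nat_mul, exp_add]; ring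
    _ ≤ (1 + δ⁻¹) ^ N * exp (-(c / 2) * s) := by gcongr

/-- A family of continuous functions on the plane that decays like a Gaussian at infinity,
uniformly for parameters in `I`. -/
structure HasGaussianDecay (I : Set ℝ) (F : ℝ → Plane → ℝ) : Prop where
  continuous : ∀ t ∈ I, Continuous (F t)
  bound : ∃ C c, 0 < c ∧ ∀ t ∈ I, ∀ x, |F t x| ≤ C * exp (-c * nsq x)

/-- A family of continuous functions on the plane that grows at most polynomially at infinity,
uniformly for parameters in `I`. -/
structure HasPolyGrowth (I : Set ℝ) (F : ℝ → Plane → ℝ) : Prop where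
  continuous : ∀ t ∈ I, Continuous (F t)
  bound : ∃ (A : ℝ) (N : ℕ), ∀ t ∈ I, ∀ x, |F t x| ≤ A * (1 + nsq x) ^ N

section Growth

variable {I : Set ℝ} {F G : ℝ → Plane → ℝ}

lemma HasPolyGrowth.const (a : ℝ) : HasPolyGrowth I fun _ _ => a :=
  ⟨fun _ _ => continuous_const, |a|, 0, fun _ _ _ => by simp⟩

lemma HasPolyGrowth.add (hF : HasPolyGrowth I F) (hG : HasPolyGrowth I G) :
    HasPolyGrowth I fun t x => F t x + G t x := by
  obtain ⟨A, N, hA⟩ := hF.bound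
  obtain ⟨B, M, hB⟩ := hG.bound
  refine ⟨fun t ht => (hF.continuous t ht).add (hG.continuous t ht), |A| + |B|, N + M,
    fun t ht x => ?_⟩
  have hx : 1 ≤ 1 + nsq x := le_add_of_nonneg_right (nsq_nonneg x)
  calc |F t x + G t x| ≤ |F t x| + |G t x| := abs_add_le _ _
    _ ≤ A * (1 + nsq x) ^ N + B * (1 + nsq x) ^ M := add_le_add (hA t ht x) (hB t ht x)
    _ ≤ |A| * (1 + nsq x) ^ (N + M) + |B| * (1 + nsq x) ^ (N + M) := by
        gcongr <;> first | exact le_abs_self _ | omega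
    _ = _ := by ring

lemma HasPolyGrowth.mul (hF : HasPolyGrowth I F) (hG : HasPolyGrowth I G) :
    HasPolyGrowth I fun t x => F t x * G t x := by
  obtain ⟨A, N, hA⟩ := hF.bound
  obtain ⟨B, M, hB⟩ := hG.bound
  refine ⟨fun t ht => (hF.continuous t ht).mul (hG.continuous t ht), A * B, N + M,
    fun t ht x => ?_⟩
  calc |F t x * G t x| = |F t x| * |G t x| := abs_mul _ _
    _ ≤ A * (1 + nsq x) ^ N * (B * (1 + nsq x) ^ M) :=
        mul_le_mul (hA t ht x) (hB t ht x) (abs_nonneg _) ((abs_nonneg _).trans (hA t ht x))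
    _ = _ := by ring

lemma HasPolyGrowth.sub (hF : HasPolyGrowth I F) (hG : HasPolyGrowth I G) :
    HasPolyGrowth I fun t x => F t x - G t x := by
  simpa only [mul_neg_one, ← sub_eq_add_neg] using hF.add (hG.mul (.const (-1)))

lemma HasPolyGrowth.pow (hF : HasPolyGrowth I F) (n : ℕ) :
    HasPolyGrowth I fun t x => F t x ^ n := by
  induction n with
  | zero => simpa only [pow_zero] using HasPolyGrowth.const 1
  | succ n ih => simpa only [pow_succ] using ih.mul hF

lemma HasGaussianDecay.add (hF : HasGaussianDecay I F) (hG : HasGaussianDecay I G) :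
    HasGaussianDecay I fun t x => F t x + G t x := by
  obtain ⟨C, c, hc, hC⟩ := hF.bound
  obtain ⟨D, d, hd, hD⟩ := hG.bound
  refine ⟨fun t ht => (hF.continuous t ht).add (hG.continuous t ht), |C| + |D|, min c d,
    lt_min hc hd, fun t ht x => ?_⟩
  have hx := nsq_nonneg x
  calc |F t x + G t x| ≤ |F t x| + |G t x| := abs_add_le _ _
    _ ≤ C * exp (-c * nsq x) + D * exp (-d * nsq x) := add_le_add (hC t ht x) (hD t ht x)
    _ ≤ |C| * exp (-min c d * nsq x) + |D| * exp (-min c d * nsq x) := by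
        gcongr
        exacts [le_abs_self _, min_le_left _ _, le_abs_self _, min_le_right _ _]
    _ = _ := by ring

lemma HasGaussianDecay.sum {F : Fin 2 → ℝ → Plane → ℝ} (hF : ∀ i, HasGaussianDecay I (F i)) :
    HasGaussianDecay I fun t x => ∑ i, F i t x := by
  simpa only [Fin.sum_univ_two] using (hF 0).add (hF 1)

lemma HasGaussianDecay.mul_polyGrowth (hF : HasGaussianDecay I F) (hG : HasPolyGrowth I G) :
    HasGaussianDecay I fun t x => F t x * G t x := by
  obtain ⟨C, c, hc, hC⟩ := hF.bound
  obtain ⟨A, N, hA⟩ := hG.bound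
  obtain ⟨D, hD⟩ := one_add_pow_mul_exp_le hc N
  refine ⟨fun t ht => (hF.continuous t ht).mul (hG.continuous t ht), |C| * |A| * D, c / 2,
    by positivity, fun t ht x => ?_⟩
  have hx := nsq_nonneg x
  calc |F t x * G t x| = |F t x| * |G t x| := abs_mul _ _
    _ ≤ C * exp (-c * nsq x) * (A * (1 + nsq x) ^ N) :=
        mul_le_mul (hC t ht x) (hA t ht x) (abs_nonneg _) ((abs_nonneg _).trans (hC t ht x))
    _ = C * A * ((1 + nsq x) ^ N * exp (-c * nsq x)) := by ring
    _ ≤ |C| * |A| * (D * exp (-(c / 2) * nsq x)) := by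
        rw [← abs_mul]
        exact mul_le_mul (le_abs_self _) (hD _ hx) (by positivity) (abs_nonneg _)
    _ = _ := by ring

lemma HasGaussianDecay.hasPolyGrowth (hF : HasGaussianDecay I F) : HasPolyGrowth I F := by
  obtain ⟨C, c, hc, hC⟩ := hF.bound
  refine ⟨hF.continuous, |C|, 0, fun t ht x => (hC t ht x).trans ?_⟩
  rw [pow_zero]
  gcongr
  · exact le_abs_self C
  · exact exp_le_one_iff.2 (by nlinarith [nsq_nonneg x])

lemma HasGaussianDecay.sub (hF : HasGaussianDecay I F) (hG : HasGaussianDecay I G) :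
    HasGaussianDecay I fun t x => F t x - G t x := by
  simpa only [mul_neg_one, ← sub_eq_add_neg] using hF.add (hG.mul_polyGrowth (.const (-1)))

lemma HasGaussianDecay.rpow (hF : HasGaussianDecay I F) (hF0 : ∀ t ∈ I, ∀ x, 0 ≤ F t x) {p : ℝ}
    (hp : 0 < p) : HasGaussianDecay I fun t x => F t x ^ p := by
  obtain ⟨C, c, hc, hC⟩ := hF.bound
  refine ⟨fun t ht => (hF.continuous t ht).rpow_const fun _ => Or.inr hp.le, |C| ^ p, c * p,
    by positivity, fun t ht x => ?_⟩
  calc |F t x ^ p| = |F t x| ^ p := abs_rpow_of_nonneg (hF0 t ht x)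
    _ ≤ (|C| * exp (-c * nsq x)) ^ p := by
        gcongr
        exact (hC t ht x).trans (by gcongr; exact le_abs_self C)
    _ = _ := by rw [mul_rpow (abs_nonneg C) (exp_pos _).le, ← exp_mul]; ring_nf

lemma HasGaussianDecay.integrable (hF : HasGaussianDecay I F) {t : ℝ} (ht : t ∈ I) :
    Integrable (F t) := by
  obtain ⟨C, c, hc, hC⟩ := hF.bound
  exact ((integrable_exp_neg_mul_nsq hc).const_mul C).mono'
    (hF.continuous t ht).aestronglyMeasurable (Eventually.of_forall fun x => hC t ht x)

end Growth

/-! ### Integration by parts -/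

lemma integral_mul_lineDeriv_eq_neg {F F' G G' : Plane → ℝ} {v : Plane}
    (hF'G : Integrable fun x => F' x * G x) (hFG' : Integrable fun x => F x * G' x)
    (hFG : Integrable fun x => F x * G x) (hF : ∀ x, HasLineDerivAt ℝ F (F' x) x v)
    (hG : ∀ x, HasLineDerivAt ℝ G (G' x) x v) :
    ∫ x, F x * G' x = -∫ x, F' x * G x :=
  integral_bilinear_hasLineDerivAt_right_eq_neg_left_of_integrable
    (B := ContinuousLinearMap.mul ℝ ℝ) hF'G hFG' hFG (fun x _ => hF x) (fun x _ => hG x)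

lemma integral_lineDeriv_eq_zero {F F' : Plane → ℝ} {v : Plane} (hF : Integrable F)
    (hF' : Integrable F') (h : ∀ x, HasLineDerivAt ℝ F (F' x) x v) : ∫ x, F' x = 0 := by
  simpa using integral_mul_lineDeriv_eq_neg (G := fun _ => 1) (G' := fun _ => 0) (v := v)
    (by simpa using hF') (by simp) (by simpa using hF) h
    fun x => by unfold HasLineDerivAt; exact hasDerivAt_const _ _

/-- The divergence of the flux `J` integrates to zero, so it may be subtracted from `∂ₜ b`. -/
theorem hasDerivAt_integral_sub_divergence {b b' : ℝ → Plane → ℝ} {J J' : Fin 2 → ℝ → Plane → ℝ}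
    {I : Set ℝ} {t₀ : ℝ} (hI : I ∈ 𝓝 t₀) (hb : HasGaussianDecay I b)
    (hb' : HasGaussianDecay I b') (hJ : ∀ i, HasGaussianDecay I (J i))
    (hJ' : ∀ i, HasGaussianDecay I (J' i))
    (hderiv : ∀ t ∈ I, ∀ x, HasDerivAt (fun s => b s x) (b' t x) t)
    (hdiv : ∀ i, ∀ x, HasLineDerivAt ℝ (J i t₀) (J' i t₀ x) x (dir i)) :
    HasDerivAt (fun t => ∫ x, b t x) (∫ x, (b' t₀ x - ∑ i, J' i t₀ x)) t₀ := by
  have h0 : t₀ ∈ I := mem_of_mem_nhds hI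
  have hflux (i : Fin 2) : ∫ x, J' i t₀ x = 0 :=
    integral_lineDeriv_eq_zero ((hJ i).integrable h0) ((hJ' i).integrable h0) (hdiv i)
  rw [integral_sub (hb'.integrable h0) (integrable_finsetSum _ fun i _ => (hJ' i).integrable h0),
    integral_finsetSum _ fun i _ => (hJ' i).integrable h0, Finset.sum_eq_zero fun i _ => hflux i,
    sub_zero]
  obtain ⟨C, c, hc, hC⟩ := hb'.bound
  exact (hasDerivAt_integral_of_dominated_loc_of_deriv_le (bound := fun x => C * exp (-c * nsq x))
    hI (by filter_upwards [hI] with s hs using (hb.continuous s hs).aestronglyMeasurable)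
    (hb.integrable h0) (hb'.continuous t₀ h0).aestronglyMeasurable
    (Eventually.of_forall fun x s hs => hC s hs x) ((integrable_exp_neg_mul_nsq hc).const_mul C)
    (Eventually.of_forall fun x s hs => hderiv s hs x)).2

open scoped CompactlySupported

/-! ### The heat kernel -/

/-- The Gaussian `(4πt)⁻¹ exp (-|z|² / 4t)`, the fundamental solution of `∂ₜ = Δ` on the plane. -/
def heatKernel (t : ℝ) (z : Plane) : ℝ := (4 * π * t)⁻¹ * exp (-nsq z / (4 * t))

/-- The partial derivative `∂ᵢ` of the heat kernel. -/
def heatKernelGrad (i : Fin 2) (t : ℝ) (z : Plane) : ℝ := -coord i z / (2 * t) * heatKernel t z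

/-- The second partial derivative `∂ᵢ∂ᵢ` of the heat kernel. -/
def heatKernelHess (i : Fin 2) (t : ℝ) (z : Plane) : ℝ :=
  (coord i z ^ 2 / (4 * t ^ 2) - 1 / (2 * t)) * heatKernel t z

lemma heatKernel_pos {t : ℝ} (ht : 0 < t) (z : Plane) : 0 < heatKernel t z := by
  unfold heatKernel; positivity

lemma heatKernel_le {t : ℝ} (ht : 0 < t) (z : Plane) : heatKernel t z ≤ (4 * π * t)⁻¹ := by
  refine mul_le_of_le_one_right (by positivity) (exp_le_one_iff.2 ?_)
  exact div_nonpos_of_nonpos_of_nonneg (neg_nonpos.2 (nsq_nonneg z)) (by positivity)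

@[fun_prop]
lemma continuous_heatKernel (t : ℝ) : Continuous (heatKernel t) := by unfold heatKernel; fun_prop

@[fun_prop]
lemma continuous_heatKernelGrad (i : Fin 2) (t : ℝ) : Continuous (heatKernelGrad i t) := by
  unfold heatKernelGrad; fun_prop

@[fun_prop]
lemma continuous_heatKernelHess (i : Fin 2) (t : ℝ) : Continuous (heatKernelHess i t) := by
  unfold heatKernelHess; fun_prop

lemma continuousOn_heatKernelHess (i : Fin 2) :
    ContinuousOn (fun x : ℝ × Plane => heatKernelHess i x.1 x.2) (Ioi 0 ×ˢ univ) := by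
  have hne {a : ℝ × Plane} (ha : a ∈ Ioi (0 : ℝ) ×ˢ (univ : Set Plane)) : a.1 ≠ 0 :=
    (mem_Ioi.1 ha.1).ne'
  unfold heatKernelHess heatKernel
  refine (ContinuousOn.sub ?_ ?_).mul (ContinuousOn.mul ?_ (ContinuousOn.rexp ?_))
  · exact ContinuousOn.div (by fun_prop) (by fun_prop) fun a ha => by have := hne ha; positivity
  · exact ContinuousOn.div (by fun_prop) (by fun_prop) fun a ha => by have := hne ha; positivity
  · exact ContinuousOn.inv₀ (by fun_prop) fun a ha => by have := hne ha; positivity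
  · exact ContinuousOn.div (by fun_prop) (by fun_prop) fun a ha => by have := hne ha; positivity

lemma hasDerivAt_heatKernel {t : ℝ} (ht : 0 < t) (z : Plane) :
    HasDerivAt (fun s => heatKernel s z) (∑ i, heatKernelHess i t z) t := by
  have hmul (a : ℝ) : HasDerivAt (fun s : ℝ => a * s) a t := by
    simpa using (hasDerivAt_id t).const_mul a
  convert! ((hmul (4 * π)).inv (by positivity)).mul
    (((hasDerivAt_const t (-nsq z)).div (hmul 4) (by positivity)).exp) using 1
  simp only [heatKernelHess, heatKernel, ← Finset.sum_mul, Finset.sum_sub_distrib,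
    ← Finset.sum_div, sum_coord_sq, Finset.sum_const, Finset.card_univ, Fintype.card_fin]
  simp
  field_simp
  ring

lemma hasLineDerivAt_heatKernel (i : Fin 2) (t : ℝ) (z : Plane) :
    HasLineDerivAt ℝ (heatKernel t) (heatKernelGrad i t z) z (dir i) := by
  have hsq : HasDerivAt (fun s : ℝ => -(nsq z + 2 * s * coord i z + s ^ 2) / (4 * t))
      (-(2 * coord i z) / (4 * t)) 0 := by
    convert! ((((((hasDerivAt_id (0 : ℝ)).const_mul 2).mul_const (coord i z)).const_add
      (nsq z)).add ((hasDerivAt_id (0 : ℝ)).pow 2)).neg).div_const (4 * t) using 1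
    simp
  unfold HasLineDerivAt heatKernel
  simp only [nsq_add_smul_dir]
  convert! hsq.exp.const_mul (4 * π * t)⁻¹ using 1
  rw [heatKernelGrad, heatKernel, show -(2 * coord i z) / (4 * t) = -coord i z / (2 * t) by ring]
  ring_nf

lemma hasLineDerivAt_heatKernelGrad (i : Fin 2) (t : ℝ) (z : Plane) :
    HasLineDerivAt ℝ (heatKernelGrad i t) (heatKernelHess i t z) z (dir i) := by
  have hlin : HasDerivAt (fun s : ℝ => -(coord i z + s) / (2 * t)) (-1 / (2 * t)) 0 :=
    (((hasDerivAt_id (0 : ℝ)).const_add (coord i z)).neg).div_const (2 * t)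
  unfold HasLineDerivAt heatKernelGrad
  simp only [coord_add_smul_dir]
  convert! hlin.mul (hasLineDerivAt_heatKernel i t z) using 1
  simp only [heatKernelHess, heatKernelGrad, add_zero, zero_smul]
  ring

lemma integrable_heatKernel {t : ℝ} (ht : 0 < t) : Integrable (heatKernel t) := by
  refine ((integrable_exp_neg_mul_nsq (c := (4 * t)⁻¹) (by positivity)).const_mul
    (4 * π * t)⁻¹).congr (Eventually.of_forall fun z => ?_)
  simp only [heatKernel, div_eq_inv_mul, neg_mul, mul_neg]

lemma integral_heatKernel {t : ℝ} (ht : 0 < t) : ∫ z, heatKernel t z = 1 := by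
  have hform (z : Plane) : heatKernel t z = (4 * π * t)⁻¹ * exp (-(4 * t)⁻¹ * nsq z) := by
    rw [heatKernel, neg_div, div_eq_inv_mul, neg_mul]
  simp only [hform]
  rw [integral_const_mul, integral_exp_neg_mul_nsq, sq_sqrt (by positivity)]
  field_simp

/-- A family of kernels is heat-subordinate if it is bounded by polynomial multiples of the heat
kernel, uniformly for `t` away from `0`. -/
structure IsHeatSubordinate (k : ℝ → Plane → ℝ) : Prop where
  continuous : ∀ t, Continuous (k t)
  bound : ∀ lo > 0, ∃ A, 0 ≤ A ∧ ∀ t ≥ lo, ∀ z, |k t z| ≤ A * (1 + nsq z) * heatKernel t z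

lemma isHeatSubordinate_heatKernel : IsHeatSubordinate heatKernel := by
  refine ⟨continuous_heatKernel, fun lo hlo => ⟨1, zero_le_one, fun t ht z => ?_⟩⟩
  have hK := heatKernel_pos (hlo.trans_le ht) z
  rw [abs_of_pos hK, one_mul]
  exact le_mul_of_one_le_left hK.le (le_add_of_nonneg_right (nsq_nonneg z))

lemma isHeatSubordinate_heatKernelGrad (i : Fin 2) : IsHeatSubordinate (heatKernelGrad i) := by
  refine ⟨continuous_heatKernelGrad i, fun lo hlo => ⟨1 / (2 * lo), by positivity,
    fun t ht z => ?_⟩⟩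
  have ht0 : 0 < t := hlo.trans_le ht
  have hcoord : |coord i z| ≤ 1 + nsq z := by
    nlinarith [coord_sq_le_nsq i z, sq_abs (coord i z), sq_nonneg (|coord i z| - 1)]
  rw [heatKernelGrad, abs_mul, abs_of_pos (heatKernel_pos ht0 z), abs_div, abs_neg,
    abs_of_pos (by positivity : 0 < 2 * t)]
  refine mul_le_mul_of_nonneg_right ?_ (heatKernel_pos ht0 z).le
  have hz := nsq_nonneg z
  calc |coord i z| / (2 * t) ≤ (1 + nsq z) / (2 * lo) := by gcongr
    _ = 1 / (2 * lo) * (1 + nsq z) := by ring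

lemma isHeatSubordinate_heatKernelHess (i : Fin 2) : IsHeatSubordinate (heatKernelHess i) := by
  refine ⟨continuous_heatKernelHess i, fun lo hlo => ⟨1 / (4 * lo ^ 2) + 1 / (2 * lo),
    by positivity, fun t ht z => ?_⟩⟩
  have ht0 : 0 < t := hlo.trans_le ht
  have hz := nsq_nonneg z
  rw [heatKernelHess, abs_mul, abs_of_pos (heatKernel_pos ht0 z)]
  refine mul_le_mul_of_nonneg_right ?_ (heatKernel_pos ht0 z).le
  calc |coord i z ^ 2 / (4 * t ^ 2) - 1 / (2 * t)|
      ≤ coord i z ^ 2 / (4 * t ^ 2) + 1 / (2 * t) := by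
        refine (abs_sub _ _).trans_eq ?_
        rw [abs_of_nonneg (by positivity), abs_of_nonneg (by positivity)]
    _ ≤ (1 + nsq z) / (4 * lo ^ 2) + (1 + nsq z) / (2 * lo) := by
        have := coord_sq_le_nsq i z
        gcongr <;> linarith
    _ = _ := by ring

/-! ### Convolutions with compactly supported functions -/

local notation:67 f "∗" k => convolution f k (ContinuousLinearMap.mul ℝ ℝ) volume

lemma integrable_mul_of_continuous (f : C_c(Plane, ℝ)) {k : Plane → ℝ} (hk : Continuous k) :
    Integrable fun y => f y * k y :=
  (f.continuous.mul hk).integrable_of_hasCompactSupport f.hasCompactSupport.mul_right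

lemma continuous_convolution (f : C_c(Plane, ℝ)) {k : Plane → ℝ} (hk : Continuous k) :
    Continuous (f ∗ k) :=
  f.hasCompactSupport.continuous_convolution_left _ f.continuous hk.locallyIntegrable

lemma abs_convolution_le (f : C_c(Plane, ℝ)) (k : Plane → ℝ) (x : Plane) :
    |(f ∗ k) x| ≤ (⇑|f| ∗ fun z => |k z|) x :=
  abs_integral_le_integral_abs.trans_eq (by
    simp only [convolution, ContinuousLinearMap.mul_apply', abs_mul]; rfl)

lemma convolution_mono {f : C_c(Plane, ℝ)} (hf : 0 ≤ f) {k l : Plane → ℝ} (hk : Continuous k)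
    (hl : Continuous l) {x : Plane} (h : ∀ y, f y ≠ 0 → k (x - y) ≤ l (x - y)) :
    (f ∗ k) x ≤ (f ∗ l) x := by
  refine integral_mono (integrable_mul_of_continuous f (k := fun y => k (x - y)) (by fun_prop))
    (integrable_mul_of_continuous f (k := fun y => l (x - y)) (by fun_prop)) fun y => ?_
  by_cases hy : f y = 0
  · simp [hy]
  · exact mul_le_mul_of_nonneg_left (h y hy) (hf y)

lemma convolution_nonneg {f : C_c(Plane, ℝ)} (hf : 0 ≤ f) {k : Plane → ℝ} (hk : ∀ z, 0 ≤ k z)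
    (x : Plane) : 0 ≤ (f ∗ k) x :=
  integral_nonneg fun y => mul_nonneg (hf y) (hk _)

lemma convolution_heatKernel_pos {f : C_c(Plane, ℝ)} (hf : 0 < f) {t : ℝ} (ht : 0 < t)
    (x : Plane) : 0 < (f ∗ heatKernel t) x := by
  obtain ⟨y, hy⟩ : ∃ y, f y ≠ 0 := by
    by_contra! h
    exact hf.ne' (CompactlySupportedContinuousMap.ext h)
  refine Continuous.integral_pos_of_hasCompactSupport_nonneg_nonzero (x := y) ?_ ?_ ?_ ?_
  · exact f.continuous.mul (by fun_prop)
  · exact f.hasCompactSupport.mul_right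
  · exact fun y => mul_nonneg (hf.le y) (heatKernel_pos ht _).le
  · exact mul_ne_zero hy (heatKernel_pos ht _).ne'

/-- Differentiation under the integral sign; on the support of `f` the domination is automatic,
by compactness. -/
lemma hasDerivAt_integral_mul (f : C_c(Plane, ℝ)) {k k' : ℝ → Plane → ℝ} {s₀ r : ℝ} (hr : 0 < r)
    (hk : ∀ s ∈ Metric.closedBall s₀ r, Continuous (k s))
    (hk' : ContinuousOn (Function.uncurry k') (Metric.closedBall s₀ r ×ˢ univ))
    (hderiv : ∀ s ∈ Metric.closedBall s₀ r, ∀ y, HasDerivAt (fun s => k s y) (k' s y) s) :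
    HasDerivAt (fun s => ∫ y, f y * k s y) (∫ y, f y * k' s₀ y) s₀ := by
  obtain ⟨M, hM⟩ := (((isCompact_closedBall s₀ r).prod f.hasCompactSupport).bddAbove_image
    ((hk'.mono (prod_mono_right (subset_univ _))).norm))
  have h0 : s₀ ∈ Metric.closedBall s₀ r := Metric.mem_closedBall_self hr.le
  have hk'₀ : Continuous (k' s₀) :=
    continuousOn_univ.1 (hk'.comp (f := fun y => (s₀, y)) (by fun_prop) fun y _ => ⟨h0, mem_univ _⟩)
  refine (hasDerivAt_integral_of_dominated_loc_of_deriv_le (μ := volume)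
    (F := fun s y => f y * k s y) (F' := fun s y => f y * k' s y)
    (bound := fun y => |f y| * M) (Metric.closedBall_mem_nhds s₀ hr) ?_
    (integrable_mul_of_continuous f (hk s₀ h0)) (f.continuous.mul hk'₀).aestronglyMeasurable
    (Eventually.of_forall fun y s hs => ?_) (f.integrable.abs.mul_const M)
    (Eventually.of_forall fun y s hs => (hderiv s hs y).const_mul (f y))).2
  · filter_upwards [Metric.closedBall_mem_nhds s₀ hr] with s hs
    exact (f.continuous.mul (hk s hs)).aestronglyMeasurable
  · rw [norm_mul]
    by_cases hy : y ∈ tsupport f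
    · exact mul_le_mul_of_nonneg_left (hM ⟨(s, y), ⟨hs, hy⟩, rfl⟩) (norm_nonneg _)
    · simp [image_eq_zero_of_notMem_tsupport hy]

lemma hasLineDerivAt_convolution (f : C_c(Plane, ℝ)) {k k' : Plane → ℝ} (hk : Continuous k)
    (hk' : Continuous k') {v : Plane} (hderiv : ∀ z, HasLineDerivAt ℝ k (k' z) z v) (x : Plane) :
    HasLineDerivAt ℝ (f ∗ k) ((f ∗ k') x) x v := by
  have := hasDerivAt_integral_mul f (k := fun s y => k (x + s • v - y))
    (k' := fun s y => k' (x + s • v - y)) (s₀ := 0) (r := 1) one_pos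
    (fun s _ => by fun_prop) (by unfold Function.uncurry; fun_prop) fun s _ y => ?_
  · simp only [zero_smul, add_zero] at this
    exact this
  · convert! (hderiv (x + s • v - y)).comp_of_eq s ((hasDerivAt_id s).sub_const s) (by simp) using 1
    · ext s'
      simp only [Function.comp, id, sub_smul]
      congr 1
      abel
    · simp

lemma hasDerivAt_convolution_heatKernel (f : C_c(Plane, ℝ)) {t : ℝ} (ht : 0 < t) (x : Plane) :
    HasDerivAt (fun s => (f ∗ heatKernel s) x) (∑ i, (f ∗ heatKernelHess i t) x) t := by
  have hpos {s : ℝ} (hs : s ∈ Metric.closedBall t (t / 2)) : 0 < s := by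
    rw [Metric.mem_closedBall, dist_eq, abs_le] at hs
    linarith
  convert! hasDerivAt_integral_mul f (k := fun s y => heatKernel s (x - y))
    (k' := fun s y => ∑ i, heatKernelHess i s (x - y)) (half_pos ht) (fun s _ => by fun_prop) ?_
    (fun s hs y => hasDerivAt_heatKernel (hpos hs) (x - y)) using 1
  · simp only [Finset.mul_sum]
    exact (integral_finsetSum _ fun i _ =>
      integrable_mul_of_continuous f (k := fun y => heatKernelHess i t (x - y))
        (by fun_prop)).symm
  · exact continuousOn_finsetSum _ fun i _ => (continuousOn_heatKernelHess i).comp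
      (f := fun a : ℝ × Plane => (a.1, x - a.2)) (by fun_prop) fun a ha => ⟨hpos ha.1, mem_univ _⟩

/-! ### Decay of heat flows -/

lemma heatKernel_sub_le {lo hi t R : ℝ} (hlo : 0 < lo) (ht : t ∈ Icc lo hi) {x y : Plane}
    (hy : nsq y ≤ R) :
    heatKernel t (x - y) ≤ (4 * π * lo)⁻¹ * exp (R / (4 * lo)) * exp (-(1 / (8 * hi)) * nsq x) := by
  obtain ⟨htlo, hthi⟩ := ht
  have ht0 : 0 < t := hlo.trans_le htlo
  have hR : 0 ≤ R := (nsq_nonneg y).trans hy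
  have hx := nsq_nonneg x
  have hxy : nsq x ≤ 2 * nsq (x - y) + 2 * nsq y := by simpa using nsq_add_le (x - y) y
  rw [mul_assoc, ← exp_add, heatKernel]
  gcongr
  calc -nsq (x - y) / (4 * t) ≤ (R - nsq x / 2) / (4 * t) := by gcongr; linarith
    _ = R / (4 * t) - nsq x / (8 * t) := by field_simp; ring
    _ ≤ R / (4 * lo) - nsq x / (8 * hi) := by gcongr
    _ = _ := by ring

lemma hasGaussianDecay_convolution_heatKernel {f : C_c(Plane, ℝ)} (hf : 0 ≤ f) {lo hi : ℝ}
    (hlo : 0 < lo) : HasGaussianDecay (Icc lo hi) fun t x => (f ∗ heatKernel t) x := by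
  rcases lt_or_ge hi lo with hlt | hle
  · exact ⟨by simp [Icc_eq_empty_of_lt hlt], 0, 1, one_pos, by simp [Icc_eq_empty_of_lt hlt]⟩
  have hhi : 0 < hi := hlo.trans_le hle
  obtain ⟨R, _, hfR⟩ := exists_nsq_le_of_hasCompactSupport f.hasCompactSupport
  refine ⟨fun t _ => continuous_convolution f (continuous_heatKernel t),
    (∫ y, f y) * ((4 * π * lo)⁻¹ * exp (R / (4 * lo))), 1 / (8 * hi), by positivity,
    fun t ht x => ?_⟩
  rw [abs_of_nonneg (convolution_nonneg hf (fun z => (heatKernel_pos (hlo.trans_le ht.1) z).le) x),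
    mul_assoc, ← integral_mul_const]
  exact convolution_mono hf (continuous_heatKernel t) continuous_const
    fun y hy => heatKernel_sub_le hlo ht (hfR y hy)

lemma IsHeatSubordinate.exists_abs_convolution_le {k : ℝ → Plane → ℝ} (hk : IsHeatSubordinate k)
    (f : C_c(Plane, ℝ)) {lo : ℝ} (hlo : 0 < lo) :
    ∃ A, 0 ≤ A ∧ ∀ t ≥ lo, ∀ x,
      |(f ∗ k t) x| ≤ A * (1 + nsq x) * (⇑|f| ∗ heatKernel t) x := by
  obtain ⟨R, hR, hfR⟩ := exists_nsq_le_of_hasCompactSupport |f|.hasCompactSupport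
  obtain ⟨A, hA, hkA⟩ := hk.bound lo hlo
  refine ⟨A * (2 + 2 * R), by positivity, fun t ht x => (abs_convolution_le f (k t) x).trans ?_⟩
  have hx := nsq_nonneg x
  calc (⇑|f| ∗ fun z => |k t z|) x
      ≤ (⇑|f| ∗ ((A * (2 + 2 * R) * (1 + nsq x)) • heatKernel t)) x := by
        refine convolution_mono (abs_nonneg f) (hk.continuous t).abs
          ((continuous_heatKernel t).const_smul _) fun y hy => ?_
        have hxy : nsq (x - y) ≤ 2 * nsq x + 2 * nsq y := by
          simpa only [sub_eq_add_neg, nsq_neg] using nsq_add_le x (-y)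
        refine (hkA t ht _).trans (mul_le_mul_of_nonneg_right ?_
          (heatKernel_pos (hlo.trans_le ht) (x - y)).le)
        rw [mul_assoc A]
        exact mul_le_mul_of_nonneg_left (by nlinarith [hfR y hy]) hA
    _ = A * (2 + 2 * R) * (1 + nsq x) * (⇑|f| ∗ heatKernel t) x := by
        rw [convolution_smul, Pi.smul_apply, smul_eq_mul]

lemma IsHeatSubordinate.hasGaussianDecay_convolution {k : ℝ → Plane → ℝ}
    (hk : IsHeatSubordinate k) (f : C_c(Plane, ℝ)) {lo hi : ℝ} (hlo : 0 < lo) :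
    HasGaussianDecay (Icc lo hi) fun t x => (f ∗ k t) x := by
  obtain ⟨A, hA, hkA⟩ := hk.exists_abs_convolution_le f hlo
  have hgrowth : HasPolyGrowth (Icc lo hi) fun _ x => A * (1 + nsq x) :=
    ⟨fun _ _ => by fun_prop, A, 1, fun t _ x => by
      have := nsq_nonneg x
      rw [abs_of_nonneg (by positivity), pow_one]⟩
  obtain ⟨C, c, hc, hC⟩ :=
    ((hasGaussianDecay_convolution_heatKernel (abs_nonneg f) hlo).mul_polyGrowth hgrowth).bound
  refine ⟨fun t _ => continuous_convolution f (hk.continuous t), C, c, hc, fun t ht x => ?_⟩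
  exact (hkA t ht.1 x).trans ((mul_comm _ _).trans_le ((le_abs_self _).trans (hC t ht x)))

lemma IsHeatSubordinate.hasPolyGrowth_convolution_div {k : ℝ → Plane → ℝ}
    (hk : IsHeatSubordinate k) {f : C_c(Plane, ℝ)} (hf : 0 < f) {lo hi : ℝ} (hlo : 0 < lo) :
    HasPolyGrowth (Icc lo hi) fun t x => (f ∗ k t) x / (f ∗ heatKernel t) x := by
  obtain ⟨A, _, hkA⟩ := hk.exists_abs_convolution_le f hlo
  have hpos {t : ℝ} (ht : t ∈ Icc lo hi) (x : Plane) : 0 < (f ∗ heatKernel t) x :=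
    convolution_heatKernel_pos hf (hlo.trans_le ht.1) x
  refine ⟨fun t ht => (continuous_convolution f (hk.continuous t)).div
    (continuous_convolution f (continuous_heatKernel t)) fun x => (hpos ht x).ne', A, 1,
    fun t ht x => ?_⟩
  have h := hkA t ht.1 x
  rw [abs_of_nonneg hf.le] at h
  rwa [abs_div, abs_of_pos (hpos ht x), div_le_iff₀ (hpos ht x), pow_one]

/-! ### Mass and Jensen's inequality -/

lemma integrable_heatKernel_sub {t : ℝ} (ht : 0 < t) (x : Plane) :
    Integrable fun y => heatKernel t (x - y) :=
  (integrable_heatKernel ht).comp_sub_left x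

lemma integral_heatKernel_sub {t : ℝ} (ht : 0 < t) (x : Plane) :
    ∫ y, heatKernel t (x - y) = 1 :=
  (integral_sub_left_eq_self (heatKernel t) volume x).trans (integral_heatKernel ht)

lemma integrable_convolution_heatKernel (f : C_c(Plane, ℝ)) {t : ℝ} (ht : 0 < t) :
    Integrable (f ∗ heatKernel t) :=
  f.integrable.integrable_convolution _ (integrable_heatKernel ht)

lemma integral_convolution_heatKernel (f : C_c(Plane, ℝ)) {t : ℝ} (ht : 0 < t) :
    ∫ x, (f ∗ heatKernel t) x = ∫ x, f x := by
  rw [integral_convolution _ f.integrable (integrable_heatKernel ht), integral_heatKernel ht,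
    ContinuousLinearMap.mul_apply', mul_one]

lemma rpow_add_mul_sub_le_rpow {a b r : ℝ} (ha : 0 ≤ a) (hb : 0 < b) (hr : 1 ≤ r) :
    b ^ r + r * b ^ (r - 1) * (a - b) ≤ a ^ r := by
  have h := one_add_mul_self_le_rpow_one_add (s := a / b - 1) (by linarith [div_nonneg ha hb.le]) hr
  rw [add_sub_cancel, div_rpow ha hb.le, le_div_iff₀ (rpow_pos_of_pos hb _)] at h
  refine le_trans (le_of_eq ?_) h
  rw [rpow_sub_one hb.ne']
  field_simp

/-- The composition of a compactly supported function with `s ↦ s ^ r`. -/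
def rpowComp (f : C_c(Plane, ℝ)) {r : ℝ} (hr : 0 < r) : C_c(Plane, ℝ) where
  toFun x := f x ^ r
  continuous_toFun := f.continuous.rpow_const fun _ => Or.inr hr.le
  hasCompactSupport' := f.hasCompactSupport.comp_left (g := fun a : ℝ => a ^ r)
    (zero_rpow hr.ne')

lemma convolution_heatKernel_rpow_le {f : C_c(Plane, ℝ)} (hf : 0 ≤ f) {t r : ℝ} (ht : 0 < t)
    (hr : 1 ≤ r) (x : Plane) :
    (f ∗ heatKernel t) x ^ r ≤ (rpowComp f (one_pos.trans_le hr) ∗ heatKernel t) x := by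
  have hr0 := one_pos.trans_le hr
  have hK (y : Plane) : 0 ≤ heatKernel t (x - y) := (heatKernel_pos ht _).le
  rcases (convolution_nonneg hf (fun z => (heatKernel_pos ht z).le) x).eq_or_lt with h | h
  · rw [← h, zero_rpow hr0.ne']
    exact convolution_nonneg (fun y => rpow_nonneg (hf y) r) (fun z => (heatKernel_pos ht z).le) x
  set b := (f ∗ heatKernel t) x
  have hint (c : ℝ) : Integrable fun y => c * heatKernel t (x - y) :=
    (integrable_heatKernel_sub ht x).const_mul c
  have hintf (g : C_c(Plane, ℝ)) : Integrable fun y => g y * heatKernel t (x - y) :=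
    integrable_mul_of_continuous g (k := fun y => heatKernel t (x - y)) (by fun_prop)
  have hdiff : Integrable fun y => r * b ^ (r - 1) *
      (f y * heatKernel t (x - y) - b * heatKernel t (x - y)) :=
    ((hintf f).sub (hint b)).const_mul _
  calc b ^ r
      = ∫ y, (b ^ r * heatKernel t (x - y) + r * b ^ (r - 1) *
          (f y * heatKernel t (x - y) - b * heatKernel t (x - y))) := by
        rw [integral_add (hint _) hdiff, integral_const_mul, integral_const_mul,
          integral_sub (hintf f) (hint b), integral_const_mul,
          integral_heatKernel_sub ht, show ∫ y, f y * heatKernel t (x - y) = b from rfl]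
        ring
    _ ≤ ∫ y, f y ^ r * heatKernel t (x - y) := by
        refine integral_mono ((hint _).add hdiff) (hintf (rpowComp f hr0)) fun y => ?_
        refine (le_of_eq ?_).trans
          (mul_le_mul_of_nonneg_right (rpow_add_mul_sub_le_rpow (hf y) h hr) (hK y))
        ring

lemma integral_convolution_heatKernel_rpow_le {f : C_c(Plane, ℝ)} (hf : 0 ≤ f) {t r : ℝ}
    (ht : 0 < t) (hr : 1 ≤ r) : ∫ x, (f ∗ heatKernel t) x ^ r ≤ ∫ x, f x ^ r := by
  have hr0 := one_pos.trans_le hr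
  calc ∫ x, (f ∗ heatKernel t) x ^ r ≤ ∫ x, (rpowComp f hr0 ∗ heatKernel t) x :=
        integral_mono_of_nonneg (Eventually.of_forall fun x => rpow_nonneg
            (convolution_nonneg hf (fun z => (heatKernel_pos ht z).le) x) r)
          (integrable_convolution_heatKernel _ ht)
          (Eventually.of_forall (convolution_heatKernel_rpow_le hf ht hr))
    _ = ∫ x, f x ^ r := integral_convolution_heatKernel _ ht

/-! ### The Bellman function along two heat flows -/

section BellmanDecay

variable {p q : ℝ} {I : Set ℝ} {w z α β : ℝ → Plane → ℝ}

lemma hasGaussianDecay_bellmanSum (hpq : p.HolderConjugate q) (hw : HasGaussianDecay I w)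
    (hz : HasGaussianDecay I z) (hw0 : ∀ t ∈ I, ∀ x, 0 < w t x) (hz0 : ∀ t ∈ I, ∀ x, 0 < z t x) :
    HasGaussianDecay I fun t x => bellmanSum p q (w t x) (z t x) :=
  (hw.rpow (fun t ht x => (hw0 t ht x).le) hpq.pos).add
    (hz.rpow (fun t ht x => (hz0 t ht x).le) hpq.symm.pos)

variable (hpq : p.HolderConjugate q) (hw : HasGaussianDecay I w) (hz : HasGaussianDecay I z)
  (hw0 : ∀ t ∈ I, ∀ x, 0 < w t x) (hz0 : ∀ t ∈ I, ∀ x, 0 < z t x)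
include hpq hw hz hw0 hz0

lemma hasPolyGrowth_bellmanScale :
    HasPolyGrowth I fun t x => bellmanScale p q (w t x) (z t x) := by
  refine ⟨fun t ht => ?_, 1, 0, fun t ht x => ?_⟩
  · have hS := (hasGaussianDecay_bellmanSum hpq hw hz hw0 hz0).continuous t ht
    exact ((hw.continuous t ht).pow 2).mul
      (hS.rpow_const fun x => Or.inl (bellmanSum_pos (hw0 t ht x) (hz0 t ht x)).ne')
  · rw [abs_of_pos (bellmanScale_pos (hw0 t ht x) (hz0 t ht x)), pow_zero, mul_one]
    exact bellmanScale_le_one hpq.pos (hw0 t ht x) (hz0 t ht x)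

lemma hasPolyGrowth_bellmanShare :
    HasPolyGrowth I fun t x => bellmanShare p q (w t x) (z t x) := by
  refine ⟨fun t ht => ?_, 1, 0, fun t ht x => ?_⟩
  · have hS := (hasGaussianDecay_bellmanSum hpq hw hz hw0 hz0).continuous t ht
    exact ((hz.continuous t ht).rpow_const fun _ => Or.inr hpq.symm.pos.le).div hS
      fun x => (bellmanSum_pos (hw0 t ht x) (hz0 t ht x)).ne'
  · rw [abs_of_pos (bellmanShare_pos (hw0 t ht x) (hz0 t ht x)), pow_zero, mul_one]
    exact bellmanShare_le_one (hw0 t ht x) (hz0 t ht x)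

lemma hasGaussianDecay_bellman :
    HasGaussianDecay I fun t x => bellman p q (w t x) (z t x) :=
  (hasGaussianDecay_bellmanSum hpq hw hz hw0 hz0).mul_polyGrowth
    ((hasPolyGrowth_bellmanScale hpq hw hz hw0 hz0).add
      ((HasPolyGrowth.const _).mul (hasPolyGrowth_bellmanShare hpq hw hz hw0 hz0)))

variable (hα : HasPolyGrowth I α) (hβ : HasPolyGrowth I β)
include hα hβ

lemma hasGaussianDecay_bellmanGrad :
    HasGaussianDecay I fun t x => bellmanGrad p q (w t x) (z t x) (α t x) (β t x) := by
  have hτ := hasPolyGrowth_bellmanScale hpq hw hz hw0 hz0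
  have hy := hasPolyGrowth_bellmanShare hpq hw hz hw0 hz0
  have hαcoeff := hτ.mul ((HasPolyGrowth.const p).sub ((HasPolyGrowth.const (p - 2)).mul hy))
  have hβcoeff := hy.mul
    (((HasPolyGrowth.const (2 - q)).mul hτ).add (HasPolyGrowth.const ((5 * p - 1) * q)))
  exact (hasGaussianDecay_bellmanSum hpq hw hz hw0 hz0).mul_polyGrowth
    ((hαcoeff.mul hα).add (hβcoeff.mul hβ))

lemma hasGaussianDecay_bellmanHess :
    HasGaussianDecay I fun t x => bellmanHess p q (w t x) (z t x) (α t x) (β t x) := by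
  have hτ := hasPolyGrowth_bellmanScale hpq hw hz hw0 hz0
  have hy := hasPolyGrowth_bellmanShare hpq hw hz hw0 hz0
  have hααcoeff := hτ.mul ((HasPolyGrowth.const 2).add
    (((HasPolyGrowth.const (p - 2)).mul ((HasPolyGrowth.const 1).sub hy)).mul
      ((HasPolyGrowth.const (p + 1)).add ((HasPolyGrowth.const 2).mul hy))))
  have hαβcoeff := ((HasPolyGrowth.const (4 * (2 - q))).mul hτ).mul (hy.pow 2)
  have hββcoeff := hy.mul
    ((((HasPolyGrowth.const ((q - 1) * (2 - q))).mul hτ).mul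
      ((HasPolyGrowth.const 1).sub ((HasPolyGrowth.const 2).mul hy))).add
      (HasPolyGrowth.const ((5 * p - 1) * (q - 1) * q)))
  exact (hasGaussianDecay_bellmanSum hpq hw hz hw0 hz0).mul_polyGrowth
    (((hααcoeff.mul (hα.pow 2)).add (hαβcoeff.mul (hα.mul hβ))).add (hββcoeff.mul (hβ.pow 2)))

end BellmanDecay

lemma sum_bellmanGrad {ι : Type*} [Fintype ι] (p q u v : ℝ) (α β : ι → ℝ) :
    ∑ i, bellmanGrad p q u v (α i) (β i) = bellmanGrad p q u v (∑ i, α i) (∑ i, β i) := by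
  simp only [bellmanGrad, ← Finset.mul_sum, Finset.sum_add_distrib]

section HeatFlow

variable {p q t : ℝ} {f g : C_c(Plane, ℝ)}

lemma hasDerivAt_bellman_heatFlow (hpq : p.HolderConjugate q) (hf : 0 < f) (hg : 0 < g)
    (ht : 0 < t) (x : Plane) :
    HasDerivAt (fun t => bellman p q ((f ∗ heatKernel t) x) ((g ∗ heatKernel t) x))
      (∑ i, bellmanGrad p q ((f ∗ heatKernel t) x) ((g ∗ heatKernel t) x)
        ((f ∗ heatKernelHess i t) x / (f ∗ heatKernel t) x)
        ((g ∗ heatKernelHess i t) x / (g ∗ heatKernel t) x)) t := by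
  rw [sum_bellmanGrad, ← Finset.sum_div, ← Finset.sum_div]
  exact hasDerivAt_bellman (hasDerivAt_convolution_heatKernel f ht x)
    (hasDerivAt_convolution_heatKernel g ht x) (convolution_heatKernel_pos hf ht x)
    (convolution_heatKernel_pos hg ht x) hpq

lemma hasLineDerivAt_bellmanGrad_heatFlow (hpq : p.HolderConjugate q) (hf : 0 < f) (hg : 0 < g)
    (ht : 0 < t) (i : Fin 2) (x : Plane) :
    HasLineDerivAt ℝ (fun x => bellmanGrad p q ((f ∗ heatKernel t) x) ((g ∗ heatKernel t) x)
        ((f ∗ heatKernelGrad i t) x / (f ∗ heatKernel t) x)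
        ((g ∗ heatKernelGrad i t) x / (g ∗ heatKernel t) x))
      (bellmanGrad p q ((f ∗ heatKernel t) x) ((g ∗ heatKernel t) x)
          ((f ∗ heatKernelHess i t) x / (f ∗ heatKernel t) x)
          ((g ∗ heatKernelHess i t) x / (g ∗ heatKernel t) x) +
        bellmanHess p q ((f ∗ heatKernel t) x) ((g ∗ heatKernel t) x)
          ((f ∗ heatKernelGrad i t) x / (f ∗ heatKernel t) x)
          ((g ∗ heatKernelGrad i t) x / (g ∗ heatKernel t) x)) x (dir i) := by
  have hgrad (h : C_c(Plane, ℝ)) := hasLineDerivAt_convolution h (continuous_heatKernel t)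
    (continuous_heatKernelGrad i t) (hasLineDerivAt_heatKernel i t) x
  have hhess (h : C_c(Plane, ℝ)) := hasLineDerivAt_convolution h (continuous_heatKernelGrad i t)
    (continuous_heatKernelHess i t) (hasLineDerivAt_heatKernelGrad i t) x
  unfold HasLineDerivAt at hgrad hhess ⊢
  convert! hasDerivAt_bellmanGrad (hgrad f) (hgrad g) (convolution_heatKernel_pos hf ht _)
    (convolution_heatKernel_pos hg ht _) hpq (by simp only [zero_smul, add_zero])
    (by simp only [zero_smul, add_zero]) (hhess f) (hhess g) using 1
  simp only [zero_smul, add_zero]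

lemma hasGaussianDecay_bellmanHess_heatFlow (hpq : p.HolderConjugate q) (hf : 0 < f) (hg : 0 < g)
    {lo hi : ℝ} (hlo : 0 < lo) (i : Fin 2) :
    HasGaussianDecay (Icc lo hi) fun t x =>
      bellmanHess p q ((f ∗ heatKernel t) x) ((g ∗ heatKernel t) x)
        ((f ∗ heatKernelGrad i t) x / (f ∗ heatKernel t) x)
        ((g ∗ heatKernelGrad i t) x / (g ∗ heatKernel t) x) :=
  hasGaussianDecay_bellmanHess hpq
    (isHeatSubordinate_heatKernel.hasGaussianDecay_convolution f hlo)
    (isHeatSubordinate_heatKernel.hasGaussianDecay_convolution g hlo)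
    (fun _ ht => convolution_heatKernel_pos hf (hlo.trans_le ht.1))
    (fun _ ht => convolution_heatKernel_pos hg (hlo.trans_le ht.1))
    ((isHeatSubordinate_heatKernelGrad i).hasPolyGrowth_convolution_div hf hlo)
    ((isHeatSubordinate_heatKernelGrad i).hasPolyGrowth_convolution_div hg hlo)

theorem hasDerivAt_integral_bellman_heatFlow (hpq : p.HolderConjugate q) (hf : 0 < f) (hg : 0 < g)
    (ht : 0 < t) :
    HasDerivAt (fun t => ∫ x, bellman p q ((f ∗ heatKernel t) x) ((g ∗ heatKernel t) x))
      (-∫ x, ∑ i, bellmanHess p q ((f ∗ heatKernel t) x) ((g ∗ heatKernel t) x)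
        ((f ∗ heatKernelGrad i t) x / (f ∗ heatKernel t) x)
        ((g ∗ heatKernelGrad i t) x / (g ∗ heatKernel t) x)) t := by
  have hlo : 0 < t / 2 := half_pos ht
  have hpos {h : C_c(Plane, ℝ)} (hh : 0 < h) :
      ∀ s ∈ Icc (t / 2) (2 * t), ∀ x, 0 < (h ∗ heatKernel s) x :=
    fun s hs => convolution_heatKernel_pos hh (hlo.trans_le hs.1)
  have hflow (h : C_c(Plane, ℝ)) :=
    isHeatSubordinate_heatKernel.hasGaussianDecay_convolution h (hi := 2 * t) hlo
  have hgrad {k : ℝ → Plane → ℝ} (hk : IsHeatSubordinate k) :=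
    hasGaussianDecay_bellmanGrad hpq (hflow f) (hflow g) (hpos hf) (hpos hg)
      (hk.hasPolyGrowth_convolution_div hf hlo) (hk.hasPolyGrowth_convolution_div hg hlo)
  convert! hasDerivAt_integral_sub_divergence (Icc_mem_nhds (by linarith) (by linarith))
    (hasGaussianDecay_bellman hpq (hflow f) (hflow g) (hpos hf) (hpos hg))
    (HasGaussianDecay.sum fun i => hgrad (isHeatSubordinate_heatKernelHess i))
    (fun i => hgrad (isHeatSubordinate_heatKernelGrad i))
    (fun i => (hgrad (isHeatSubordinate_heatKernelHess i)).add
      (hasGaussianDecay_bellmanHess_heatFlow hpq hf hg hlo i))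
    (fun s hs => hasDerivAt_bellman_heatFlow hpq hf hg (hlo.trans_le hs.1))
    (hasLineDerivAt_bellmanGrad_heatFlow hpq hf hg ht) using 1
  rw [← integral_neg]
  congr 1 with x
  rw [Finset.sum_add_distrib]
  ring

end HeatFlow

/-! ### Dissipation along the heat flow -/

/-- The function `D` of time has total integral at most `B` over `(0, ∞)`, as witnessed by a
potential `F` with values in `[0, B]` that decreases at rate at least `D`. -/
def DissipatesAtMost (D : ℝ → ℝ) (B : ℝ) : Prop :=
  ∃ F F' : ℝ → ℝ, ∀ t > 0, HasDerivAt F (F' t) t ∧ F t ∈ Icc 0 B ∧ D t ≤ -F' t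

lemma dissipatesAtMost_zero {B : ℝ} (hB : 0 ≤ B) : DissipatesAtMost 0 B :=
  ⟨0, 0, fun t _ => ⟨hasDerivAt_const t 0, ⟨le_rfl, hB⟩, by simp⟩⟩

lemma DissipatesAtMost.add {D₁ D₂ : ℝ → ℝ} {B₁ B₂ : ℝ} (h₁ : DissipatesAtMost D₁ B₁)
    (h₂ : DissipatesAtMost D₂ B₂) : DissipatesAtMost (D₁ + D₂) (B₁ + B₂) := by
  obtain ⟨F₁, F₁', h₁⟩ := h₁
  obtain ⟨F₂, F₂', h₂⟩ := h₂
  refine ⟨F₁ + F₂, F₁' + F₂', fun t ht => ?_⟩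
  obtain ⟨hderiv₁, ⟨hnonneg₁, hle₁⟩, hD₁⟩ := h₁ t ht
  obtain ⟨hderiv₂, ⟨hnonneg₂, hle₂⟩, hD₂⟩ := h₂ t ht
  refine ⟨hderiv₁.add hderiv₂, ⟨add_nonneg hnonneg₁ hnonneg₂, add_le_add hle₁ hle₂⟩, ?_⟩
  simp only [Pi.add_apply]
  linarith

lemma DissipatesAtMost.mono {D₁ D₂ : ℝ → ℝ} {B₁ B₂ : ℝ} (h : DissipatesAtMost D₁ B₁)
    (hD : ∀ t > 0, D₂ t ≤ D₁ t) (hB : B₁ ≤ B₂) : DissipatesAtMost D₂ B₂ := by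
  obtain ⟨F, F', h⟩ := h
  refine ⟨F, F', fun t ht => ?_⟩
  obtain ⟨hderiv, hF, hDF⟩ := h t ht
  exact ⟨hderiv, ⟨hF.1, hF.2.trans hB⟩, (hD t ht).trans hDF⟩

theorem DissipatesAtMost.abs_le {H H' : ℝ → ℝ} {L B : ℝ}
    (hD : DissipatesAtMost (fun t => |H' t|) B) (hH : ∀ t > 0, HasDerivAt H (H' t) t)
    (hzero : Tendsto H (𝓝[>] 0) (𝓝 L)) (htop : Tendsto H atTop (𝓝 0)) :
    |L| ≤ B := by
  obtain ⟨F, F', hF⟩ := hD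
  have hsub {s t : ℝ} (hs : 0 < s) (hst : s ≤ t) : |H t - H s| ≤ B := by
    have hpos {r : ℝ} (hr : s ≤ r) : 0 < r := hs.trans_le hr
    have := image_norm_le_of_norm_deriv_right_le_deriv_boundary'
      (f := fun r => H r - H s) (f' := H') (B := fun r => F s - F r) (B' := fun r => -F' r)
      (fun r hr => ((hH r (hpos hr.1)).continuousAt.sub continuousAt_const).continuousWithinAt)
      (fun r hr => ((hH r (hpos hr.1)).sub_const _).hasDerivWithinAt) (by simp)
      (fun r hr => ((hF r (hpos hr.1)).1.const_sub _).continuousAt.continuousWithinAt)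
      (fun r hr => ((hF r (hpos hr.1)).1.const_sub _).hasDerivWithinAt)
      (fun r hr => (hF r (hpos hr.1)).2.2) (right_mem_Icc.2 hst)
    refine this.trans ?_
    linarith [(hF s hs).2.1.2, (hF t (hpos hst)).2.1.1]
  have habs {s : ℝ} (hs : 0 < s) : |H s| ≤ B := by
    have h := (htop.sub_const (H s)).abs
    rw [zero_sub, abs_neg] at h
    exact le_of_tendsto h (by filter_upwards [eventually_ge_atTop s] with t using hsub hs)
  exact le_of_tendsto hzero.abs (by filter_upwards [self_mem_nhdsWithin] with s using habs)

lemma integrable_convolution_mul_convolution {k l : ℝ → Plane → ℝ} (hk : IsHeatSubordinate k)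
    (hl : IsHeatSubordinate l) (f g : C_c(Plane, ℝ)) {t : ℝ} (ht : 0 < t) :
    Integrable fun x => (f ∗ k t) x * (g ∗ l t) x :=
  ((hk.hasGaussianDecay_convolution f ht).mul_polyGrowth
    (hl.hasGaussianDecay_convolution g ht).hasPolyGrowth).integrable (left_mem_Icc.2 le_rfl)

/-- Twice the `L¹` norm of the product `∂ᵢ(f ∗ Kₜ) ∂ₖ(g ∗ Kₜ)`, where `Kₜ` is the heat kernel. -/
def heatDissipation (i k : Fin 2) (f g : C_c(Plane, ℝ)) (t : ℝ) : ℝ :=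
  2 * ∫ x, |(f ∗ heatKernelGrad i t) x * (g ∗ heatKernelGrad k t) x|

lemma heatDissipation_comm (i k : Fin 2) (f g : C_c(Plane, ℝ)) :
    heatDissipation i k f g = heatDissipation k i g f := by
  ext t
  simp only [heatDissipation, mul_comm]

lemma heatDissipation_zero (i k : Fin 2) (g : C_c(Plane, ℝ)) : heatDissipation i k 0 g = 0 := by
  ext t
  simp [heatDissipation]

lemma sub_convolution (f g : C_c(Plane, ℝ)) {k : Plane → ℝ} (hk : Continuous k) (x : Plane) :
    (⇑(f - g) ∗ k) x = (f ∗ k) x - (g ∗ k) x := by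
  rw [convolution, convolution, convolution, ← integral_sub]
  · simp only [CompactlySupportedContinuousMap.coe_sub, Pi.sub_apply, map_sub,
      sub_apply]
  all_goals exact integrable_mul_of_continuous _ (k := fun y => k (x - y)) (by fun_prop)

lemma heatDissipation_sub_le (i k : Fin 2) (f₁ f₂ g : C_c(Plane, ℝ)) {t : ℝ} (ht : 0 < t) :
    heatDissipation i k (f₁ - f₂) g t ≤
      heatDissipation i k f₁ g t + heatDissipation i k f₂ g t := by
  have hint (f : C_c(Plane, ℝ)) := (integrable_convolution_mul_convolution
    (isHeatSubordinate_heatKernelGrad i) (isHeatSubordinate_heatKernelGrad k) f g ht).abs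
  simp only [heatDissipation]
  rw [← mul_add, ← integral_add (hint f₁) (hint f₂)]
  gcongr
  · exact hint _
  · exact (hint f₁).add (hint f₂)
  intro x
  simp only [sub_convolution _ _ (continuous_heatKernelGrad i t), sub_mul]
  exact abs_sub _ _

lemma DissipatesAtMost.heatDissipation_sub {i k : Fin 2} {f₁ f₂ g : C_c(Plane, ℝ)} {B₁ B₂ : ℝ}
    (h₁ : DissipatesAtMost (heatDissipation i k f₁ g) B₁)
    (h₂ : DissipatesAtMost (heatDissipation i k f₂ g) B₂) :
    DissipatesAtMost (heatDissipation i k (f₁ - f₂) g) (B₁ + B₂) :=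
  (h₁.add h₂).mono (fun _ ht => heatDissipation_sub_le i k f₁ f₂ g ht) le_rfl

section Conjugate

variable {p q : ℝ} {f g : C_c(Plane, ℝ)}

lemma integral_bellman_heatFlow_le (hpq : p.HolderConjugate q) (hf : 0 < f) (hg : 0 < g) {t : ℝ}
    (ht : 0 < t) :
    ∫ x, bellman p q ((f ∗ heatKernel t) x) ((g ∗ heatKernel t) x) ≤
      (∫ x, f x ^ p) + 5 * p * ∫ x, g x ^ q := by
  have hdecay (h : C_c(Plane, ℝ)) : HasGaussianDecay (Icc t t) fun s x => (h ∗ heatKernel s) x :=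
    isHeatSubordinate_heatKernel.hasGaussianDecay_convolution h ht
  have hpos {h : C_c(Plane, ℝ)} (hh : 0 < h) :
      ∀ s ∈ Icc t t, ∀ x, 0 < (h ∗ heatKernel s) x :=
    fun s hs => convolution_heatKernel_pos hh (ht.trans_le hs.1)
  have hmem : t ∈ Icc t t := left_mem_Icc.2 le_rfl
  have hrpow {h : C_c(Plane, ℝ)} (hh : 0 < h) {r : ℝ} (hr : 0 < r) :
      Integrable fun x => (h ∗ heatKernel t) x ^ r :=
    ((hdecay h).rpow (fun s hs x => (hpos hh s hs x).le) hr).integrable hmem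
  have hfp := hrpow hf hpq.pos
  have hgq := (hrpow hg hpq.symm.pos).const_mul (5 * p)
  calc ∫ x, bellman p q ((f ∗ heatKernel t) x) ((g ∗ heatKernel t) x)
      ≤ ∫ x, ((f ∗ heatKernel t) x ^ p + 5 * p * (g ∗ heatKernel t) x ^ q) :=
        integral_mono
          ((hasGaussianDecay_bellman hpq (hdecay f) (hdecay g) (hpos hf) (hpos hg)).integrable hmem)
          (hfp.add hgq) fun x => bellman_le hpq.pos (hpos hf t hmem x) (hpos hg t hmem x)
    _ = (∫ x, (f ∗ heatKernel t) x ^ p) + 5 * p * ∫ x, (g ∗ heatKernel t) x ^ q := by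
        rw [integral_add hfp hgq, integral_const_mul]
    _ ≤ _ := add_le_add (integral_convolution_heatKernel_rpow_le hf.le ht hpq.lt.le)
        (mul_le_mul_of_nonneg_left
            (integral_convolution_heatKernel_rpow_le hg.le ht hpq.symm.lt.le)
            (mul_nonneg (by norm_num) hpq.nonneg))

lemma heatDissipation_le_integral_bellmanHess (hp : 2 ≤ p) (hpq : p.HolderConjugate q)
    (hf : 0 < f) (hg : 0 < g) (i k : Fin 2) {t : ℝ} (ht : 0 < t) :
    heatDissipation i k f g t ≤
      ∫ x, ∑ j, bellmanHess p q ((f ∗ heatKernel t) x) ((g ∗ heatKernel t) x)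
        ((f ∗ heatKernelGrad j t) x / (f ∗ heatKernel t) x)
        ((g ∗ heatKernelGrad j t) x / (g ∗ heatKernel t) x) := by
  rw [heatDissipation, ← integral_const_mul]
  refine integral_mono ?_ ?_ fun x => ?_
  · exact ((integrable_convolution_mul_convolution (isHeatSubordinate_heatKernelGrad i)
      (isHeatSubordinate_heatKernelGrad k) f g ht).abs).const_mul 2
  · exact integrable_finsetSum _ fun j _ =>
      (hasGaussianDecay_bellmanHess_heatFlow hpq hf hg ht j).integrable (left_mem_Icc.2 le_rfl)
  · exact two_mul_abs_mul_le_sum_bellmanHess hp hpq (convolution_heatKernel_pos hf ht x)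
      (convolution_heatKernel_pos hg ht x) (fun j => (f ∗ heatKernelGrad j t) x)
      (fun j => (g ∗ heatKernelGrad j t) x) i k

lemma dissipatesAtMost_heatDissipation_of_nonneg (hp : 2 ≤ p) (hpq : p.HolderConjugate q)
    (hf : 0 ≤ f) (hg : 0 ≤ g) (i k : Fin 2) :
    DissipatesAtMost (heatDissipation i k f g) ((∫ x, f x ^ p) + 5 * p * ∫ x, g x ^ q) := by
  have hB : 0 ≤ (∫ x, f x ^ p) + 5 * p * ∫ x, g x ^ q := by
    have := hpq.pos
    have hfp : 0 ≤ ∫ x, f x ^ p := integral_nonneg fun x => rpow_nonneg (hf x) p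
    have hgq : 0 ≤ ∫ x, g x ^ q := integral_nonneg fun x => rpow_nonneg (hg x) q
    positivity
  rcases hf.eq_or_lt with rfl | hf
  · rw [heatDissipation_zero]
    exact dissipatesAtMost_zero hB
  rcases hg.eq_or_lt with rfl | hg
  · rw [heatDissipation_comm, heatDissipation_zero]
    exact dissipatesAtMost_zero hB
  refine ⟨_, _, fun t ht => ⟨hasDerivAt_integral_bellman_heatFlow hpq hf hg ht,
    ⟨integral_nonneg fun x => ?_, integral_bellman_heatFlow_le hpq hf hg ht⟩, ?_⟩⟩
  · exact bellman_nonneg hpq.lt.le (convolution_heatKernel_pos hf ht x)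
      (convolution_heatKernel_pos hg ht x)
  · rw [neg_neg]
    exact heatDissipation_le_integral_bellmanHess hp hpq hf hg i k ht

lemma integral_posPart_rpow_add_negPart_rpow (f : C_c(Plane, ℝ)) {r : ℝ} (hr : 0 < r) :
    (∫ x, f⁺ x ^ r) + ∫ x, f⁻ x ^ r = ∫ x, |f x| ^ r := by
  have hpoint (a : ℝ) : a⁺ ^ r + a⁻ ^ r = |a| ^ r := by
    rcases le_total 0 a with ha | ha
    · rw [posPart_of_nonneg ha, negPart_of_nonneg ha, zero_rpow hr.ne', add_zero, abs_of_nonneg ha]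
    · rw [posPart_of_nonpos ha, negPart_of_nonpos ha, zero_rpow hr.ne', zero_add, abs_of_nonpos ha]
  exact (integral_add (rpowComp f⁺ hr).integrable (rpowComp f⁻ hr).integrable).symm.trans
    (integral_congr_ae (Eventually.of_forall fun x => hpoint (f x)))

variable (f g) in
lemma dissipatesAtMost_heatDissipation_of_two_le (hp : 2 ≤ p) (hpq : p.HolderConjugate q)
    (i k : Fin 2) :
    DissipatesAtMost (heatDissipation i k f g)
      (2 * (∫ x, |f x| ^ p) + 10 * p * ∫ x, |g x| ^ q) := by
  have hnonneg {f g : C_c(Plane, ℝ)} (hf : 0 ≤ f) (hg : 0 ≤ g) :=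
    dissipatesAtMost_heatDissipation_of_nonneg hp hpq hf hg i k
  have hfirst {g : C_c(Plane, ℝ)} (hg : 0 ≤ g) :=
    (hnonneg (posPart_nonneg f) hg).heatDissipation_sub (hnonneg (negPart_nonneg f) hg)
  have hboth := DissipatesAtMost.heatDissipation_sub
    (heatDissipation_comm i k _ _ ▸ hfirst (posPart_nonneg g))
    (heatDissipation_comm i k _ _ ▸ hfirst (negPart_nonneg g))
  rw [heatDissipation_comm, posPart_sub_negPart, posPart_sub_negPart] at hboth
  refine hboth.mono (fun _ _ => le_rfl) (le_of_eq ?_)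
  rw [← integral_posPart_rpow_add_negPart_rpow f hpq.pos,
    ← integral_posPart_rpow_add_negPart_rpow g hpq.symm.pos]
  ring

variable (f g) in
theorem dissipatesAtMost_heatDissipation (hpq : p.HolderConjugate q) (i k : Fin 2) :
    DissipatesAtMost (heatDissipation i k f g)
      (10 * (p * q) * ((∫ x, |f x| ^ p) + ∫ x, |g x| ^ q)) := by
  have hp := hpq.lt
  have hq := hpq.symm.lt
  have hfp : 0 ≤ ∫ x, |f x| ^ p := integral_nonneg fun x => rpow_nonneg (abs_nonneg _) p
  have hgq : 0 ≤ ∫ x, |g x| ^ q := integral_nonneg fun x => rpow_nonneg (abs_nonneg _) q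
  have hp_le : p ≤ p * q := le_mul_of_one_le_right (by linarith) hq.le
  have hq_le : q ≤ p * q := le_mul_of_one_le_left (by linarith) hp.le
  rcases le_total 2 p with h2 | h2
  · refine (dissipatesAtMost_heatDissipation_of_two_le f g h2 hpq i k).mono
      (fun _ _ => le_rfl) ?_
    rw [mul_add]
    exact add_le_add (mul_le_mul_of_nonneg_right (by linarith) hfp)
      (mul_le_mul_of_nonneg_right (by linarith) hgq)
  · have h2q : 2 ≤ q := by nlinarith [hpq.mul_eq_add]
    rw [heatDissipation_comm]
    refine (dissipatesAtMost_heatDissipation_of_two_le g f h2q hpq.symm k i).mono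
      (fun _ _ => le_rfl) ?_
    rw [add_comm (∫ x, |f x| ^ p), mul_add]
    exact add_le_add (mul_le_mul_of_nonneg_right (by linarith) hgq)
      (mul_le_mul_of_nonneg_right (by linarith) hfp)

end Conjugate

/-! ### The heat pairing -/

lemma abs_convolution_heatKernel_le (f : C_c(Plane, ℝ)) {t : ℝ} (ht : 0 < t) (x : Plane) :
    |(f ∗ heatKernel t) x| ≤ (⇑|f| ∗ heatKernel t) x := by
  simpa only [abs_of_pos (heatKernel_pos ht _)] using abs_convolution_le f (heatKernel t) x

lemma abs_convolution_heatKernel_le_inv_mul (f : C_c(Plane, ℝ)) {t : ℝ} (ht : 0 < t) (x : Plane) :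
    |(f ∗ heatKernel t) x| ≤ (4 * π * t)⁻¹ * ∫ y, |f y| := by
  rw [mul_comm, ← integral_mul_const]
  exact (abs_convolution_heatKernel_le f ht x).trans (convolution_mono (abs_nonneg f)
    (continuous_heatKernel t) continuous_const fun y _ => heatKernel_le ht (x - y))

lemma nsq_mul_heatKernel_le {t : ℝ} (ht : 0 < t) (z : Plane) :
    nsq z * heatKernel t z ≤ 16 * t * heatKernel (2 * t) z := by
  have hexp : nsq z / (8 * t) ≤ exp (nsq z / (8 * t)) :=
    (le_add_of_nonneg_right zero_le_one).trans (add_one_le_exp _)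
  calc nsq z * heatKernel t z
      = 8 * t * (4 * π * t)⁻¹ * exp (-nsq z / (4 * t)) * (nsq z / (8 * t)) := by
        rw [heatKernel]; field_simp
    _ ≤ 8 * t * (4 * π * t)⁻¹ * exp (-nsq z / (4 * t)) * exp (nsq z / (8 * t)) := by gcongr
    _ = 8 * t * (4 * π * t)⁻¹ * exp (-nsq z / (4 * (2 * t))) := by
        rw [mul_assoc _ (exp _), ← exp_add]; congr 2; field_simp; ring
    _ = 16 * t * heatKernel (2 * t) z := by rw [heatKernel]; field_simp; ring

lemma exists_abs_sub_le_add_mul_nsq (f : C_c(Plane, ℝ)) {ε : ℝ} (hε : 0 < ε) :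
    ∃ A, 0 ≤ A ∧ ∀ x y, |f y - f x| ≤ ε + A * nsq (x - y) := by
  obtain ⟨M, hM⟩ : ∃ M, ∀ x, |f x| ≤ M :=
    f.continuous.bounded_above_of_compact_support f.hasCompactSupport
  have hM0 : 0 ≤ M := (abs_nonneg _).trans (hM 0)
  obtain ⟨d, hd0, hd⟩ := Metric.uniformContinuous_iff.1
    (f.hasCompactSupport.uniformContinuous_of_continuous f.continuous) ε hε
  refine ⟨2 * M / d ^ 2, by positivity, fun x y => ?_⟩
  have hxy := nsq_nonneg (x - y)
  rcases lt_or_ge (nsq (x - y)) (d ^ 2) with hlt | hge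
  · have hdist : dist y x < d := by
      rw [dist_comm, dist_eq_norm, Prod.norm_def, max_lt_iff, norm_eq_abs, norm_eq_abs]
      exact ⟨abs_lt_of_sq_lt_sq ((coord_sq_le_nsq 0 (x - y)).trans_lt hlt) hd0.le,
        abs_lt_of_sq_lt_sq ((coord_sq_le_nsq 1 (x - y)).trans_lt hlt) hd0.le⟩
    exact (hd hdist).le.trans (le_add_of_nonneg_right (by positivity))
  · calc |f y - f x| ≤ |f y| + |f x| := abs_sub _ _
      _ ≤ 2 * M := by linarith [hM x, hM y]
      _ = 2 * M / d ^ 2 * d ^ 2 := by field_simp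
      _ ≤ 2 * M / d ^ 2 * nsq (x - y) := by gcongr
      _ ≤ ε + 2 * M / d ^ 2 * nsq (x - y) := le_add_of_nonneg_left hε.le

lemma abs_convolution_heatKernel_sub_le (f : C_c(Plane, ℝ)) {ε A : ℝ} (hA : 0 ≤ A)
    (hf : ∀ x y, |f y - f x| ≤ ε + A * nsq (x - y)) {t : ℝ} (ht : 0 < t) (x : Plane) :
    |(f ∗ heatKernel t) x - f x| ≤ ε + A * (16 * t) := by
  have hint := (integrable_heatKernel_sub ht x).const_mul ε
  have hint₂ := (integrable_heatKernel_sub (t := 2 * t) (by positivity) x).const_mul (A * (16 * t))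
  have hconv : (f ∗ heatKernel t) x - f x = ∫ y, (f y - f x) * heatKernel t (x - y) := by
    simp only [sub_mul]
    rw [integral_sub (integrable_mul_of_continuous f (k := fun y => heatKernel t (x - y))
      (by fun_prop)) ((integrable_heatKernel_sub ht x).const_mul _), integral_const_mul,
      integral_heatKernel_sub ht, mul_one]
    rfl
  have hpointwise (y : Plane) : |(f y - f x) * heatKernel t (x - y)| ≤
      ε * heatKernel t (x - y) + A * (16 * t) * heatKernel (2 * t) (x - y) := by
    have hK := heatKernel_pos ht (x - y)
    calc |(f y - f x) * heatKernel t (x - y)|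
        = |f y - f x| * heatKernel t (x - y) := by rw [abs_mul, abs_of_pos hK]
      _ ≤ (ε + A * nsq (x - y)) * heatKernel t (x - y) := by gcongr; exact hf x y
      _ = ε * heatKernel t (x - y) + A * (nsq (x - y) * heatKernel t (x - y)) := by ring
      _ ≤ ε * heatKernel t (x - y) + A * (16 * t * heatKernel (2 * t) (x - y)) := by
          gcongr _ + A * ?_; exact nsq_mul_heatKernel_le ht _
      _ = _ := by ring
  calc |(f ∗ heatKernel t) x - f x|
      ≤ ∫ y, (ε * heatKernel t (x - y) + A * (16 * t) * heatKernel (2 * t) (x - y)) := by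
        rw [hconv, ← norm_eq_abs]
        exact norm_integral_le_of_norm_le (hint.add hint₂) (Eventually.of_forall fun y =>
          hpointwise y)
    _ = ε + A * (16 * t) := by
        rw [integral_add hint hint₂, integral_const_mul, integral_const_mul,
          integral_heatKernel_sub ht, integral_heatKernel_sub (by positivity), mul_one, mul_one]

lemma tendstoUniformly_convolution_heatKernel (f : C_c(Plane, ℝ)) :
    TendstoUniformly (fun t => f ∗ heatKernel t) f (𝓝[>] 0) := by
  rw [Metric.tendstoUniformly_iff]
  intro ε hε
  obtain ⟨A, hA, hf⟩ := exists_abs_sub_le_add_mul_nsq f (half_pos hε)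
  have hsmall : ∀ᶠ t in 𝓝[>] (0 : ℝ), ε / 2 + A * (16 * t) < ε :=
    (ContinuousAt.eventually_lt (by fun_prop) (by fun_prop) (by simp [hε])).filter_mono
      nhdsWithin_le_nhds
  filter_upwards [self_mem_nhdsWithin, hsmall] with t (ht : 0 < t) hlt x
  rw [dist_comm, dist_eq]
  exact (abs_convolution_heatKernel_sub_le f hA hf ht x).trans_lt hlt

/-- The `L²` pairing of the heat flows of `f` and `g` at time `t`. -/
def heatPairing (f g : C_c(Plane, ℝ)) (t : ℝ) : ℝ :=
  ∫ x, (f ∗ heatKernel t) x * (g ∗ heatKernel t) x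

lemma tendsto_heatPairing_atTop (f g : C_c(Plane, ℝ)) :
    Tendsto (heatPairing f g) atTop (𝓝 0) := by
  have hbound {t : ℝ} (ht : 0 < t) :
      ‖heatPairing f g t‖ ≤ (4 * π * t)⁻¹ * (∫ y, |f y|) * ∫ y, |g y| := by
    have hmass : ∫ x, (⇑|g| ∗ heatKernel t) x = ∫ y, |g y| :=
      integral_convolution_heatKernel |g| ht
    rw [← hmass, ← integral_const_mul]
    refine norm_integral_le_of_norm_le ((integrable_convolution_heatKernel _ ht).const_mul _)
      (Eventually.of_forall fun x => ?_)
    rw [norm_mul]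
    exact mul_le_mul (abs_convolution_heatKernel_le_inv_mul f ht x)
      (abs_convolution_heatKernel_le g ht x) (abs_nonneg _)
      ((abs_nonneg _).trans (abs_convolution_heatKernel_le_inv_mul f ht x))
  have hlim : Tendsto (fun t : ℝ => (4 * π * t)⁻¹ * (∫ y, |f y|) * ∫ y, |g y|) atTop (𝓝 0) := by
    have hinv : Tendsto (fun t : ℝ => (4 * π * t)⁻¹) atTop (𝓝 0) :=
      tendsto_inv_atTop_zero.comp (tendsto_id.const_mul_atTop (by positivity))
    simpa only [zero_mul] using (hinv.mul_const (∫ y, |f y|)).mul_const (∫ y, |g y|)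
  exact squeeze_zero_norm' (by filter_upwards [eventually_gt_atTop 0] with t using hbound) hlim

lemma tendsto_heatPairing_zero (f g : C_c(Plane, ℝ)) :
    Tendsto (heatPairing f g) (𝓝[>] 0) (𝓝 (∫ x, f x * g x)) := by
  rw [Metric.tendsto_nhds]
  intro ε hε
  set N := (∫ y, |g y|) + (∫ y, |f y|) + 1
  have hN : 0 < N := by
    positivity
  have hδ : 0 < ε / N := by positivity
  filter_upwards [self_mem_nhdsWithin,
    Metric.tendstoUniformly_iff.1 (tendstoUniformly_convolution_heatKernel f) _ hδ,
    Metric.tendstoUniformly_iff.1 (tendstoUniformly_convolution_heatKernel g) _ hδ]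
    with t (ht : 0 < t) hf hg
  have hgflow := (integrable_convolution_heatKernel |g| ht).const_mul (ε / N)
  have hfabs := (f.integrable (μ := volume)).abs.const_mul (ε / N)
  have hfg : Integrable fun x => f x * g x := integrable_mul_of_continuous f g.continuous
  rw [dist_eq, heatPairing, ← integral_sub (integrable_convolution_mul_convolution
    isHeatSubordinate_heatKernel isHeatSubordinate_heatKernel f g ht) hfg]
  calc |∫ x, ((f ∗ heatKernel t) x * (g ∗ heatKernel t) x - f x * g x)|
      ≤ ∫ x, (ε / N * (⇑|g| ∗ heatKernel t) x + ε / N * |f x|) := by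
        rw [← norm_eq_abs]
        refine norm_integral_le_of_norm_le (hgflow.add hfabs) (Eventually.of_forall fun x => ?_)
        have hsplit : (f ∗ heatKernel t) x * (g ∗ heatKernel t) x - f x * g x =
            ((f ∗ heatKernel t) x - f x) * (g ∗ heatKernel t) x +
              ((g ∗ heatKernel t) x - g x) * f x := by ring
        have hfx := hf x
        have hgx := hg x
        rw [dist_comm, dist_eq] at hfx hgx
        rw [norm_eq_abs, hsplit]
        refine (abs_add_le _ _).trans (add_le_add ?_ ?_) <;> rw [abs_mul]
        · exact mul_le_mul hfx.le (abs_convolution_heatKernel_le g ht x) (abs_nonneg _) hδ.le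
        · exact mul_le_mul_of_nonneg_right hgx.le (abs_nonneg _)
    _ = ε / N * ((∫ y, |g y|) + ∫ y, |f y|) := by
        rw [integral_add hgflow hfabs, integral_const_mul, integral_const_mul,
          integral_convolution_heatKernel |g| ht, mul_add]
        rfl
    _ < ε / N * N := mul_lt_mul_of_pos_left (lt_add_one _) hδ
    _ = ε := div_mul_cancel₀ _ hN.ne'

lemma hasDerivAt_heatPairing (f g : C_c(Plane, ℝ)) {t : ℝ} (ht : 0 < t) :
    HasDerivAt (heatPairing f g)
      (2 * ∫ x, (∑ j, (f ∗ heatKernelHess j t) x) * (g ∗ heatKernel t) x) t := by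
  have hlo : 0 < t / 2 := half_pos ht
  have hf {k : ℝ → Plane → ℝ} (hk : IsHeatSubordinate k) :=
    hk.hasGaussianDecay_convolution f (hi := 2 * t) hlo
  have hg {k : ℝ → Plane → ℝ} (hk : IsHeatSubordinate k) :=
    hk.hasGaussianDecay_convolution g (hi := 2 * t) hlo
  have hK := isHeatSubordinate_heatKernel
  have hK₁ := isHeatSubordinate_heatKernelGrad
  have hK₂ := isHeatSubordinate_heatKernelHess
  have hderiv := hasDerivAt_integral_sub_divergence
    (J := fun j s x => (f ∗ heatKernel s) x * (g ∗ heatKernelGrad j s) x -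
      (f ∗ heatKernelGrad j s) x * (g ∗ heatKernel s) x)
    (J' := fun j s x => (f ∗ heatKernel s) x * (g ∗ heatKernelHess j s) x -
      (f ∗ heatKernelHess j s) x * (g ∗ heatKernel s) x)
    (Icc_mem_nhds (half_lt_self ht) (by linarith : t < 2 * t))
    ((hf hK).mul_polyGrowth (hg hK).hasPolyGrowth)
    (((HasGaussianDecay.sum fun j => hf (hK₂ j)).mul_polyGrowth (hg hK).hasPolyGrowth).add
      ((hf hK).mul_polyGrowth (HasGaussianDecay.sum fun j => hg (hK₂ j)).hasPolyGrowth))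
    (fun j => ((hf hK).mul_polyGrowth (hg (hK₁ j)).hasPolyGrowth).sub
      ((hf (hK₁ j)).mul_polyGrowth (hg hK).hasPolyGrowth))
    (fun j => ((hf hK).mul_polyGrowth (hg (hK₂ j)).hasPolyGrowth).sub
      ((hf (hK₂ j)).mul_polyGrowth (hg hK).hasPolyGrowth))
    (fun s hs x => (hasDerivAt_convolution_heatKernel f (hlo.trans_le hs.1) x).mul
      (hasDerivAt_convolution_heatKernel g (hlo.trans_le hs.1) x))
    (fun j x => ?_)
  · convert! hderiv using 1
    rw [← integral_const_mul]
    congr 1 with x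
    rw [Finset.sum_sub_distrib, ← Finset.mul_sum, ← Finset.sum_mul]
    ring
  · have hline (h : C_c(Plane, ℝ)) := hasLineDerivAt_convolution h (continuous_heatKernel t)
      (continuous_heatKernelGrad j t) (hasLineDerivAt_heatKernel j t) x
    have hline₂ (h : C_c(Plane, ℝ)) := hasLineDerivAt_convolution h (continuous_heatKernelGrad j t)
      (continuous_heatKernelHess j t) (hasLineDerivAt_heatKernelGrad j t) x
    unfold HasLineDerivAt at hline hline₂ ⊢
    convert! ((hline f).mul (hline₂ g)).sub ((hline₂ f).mul (hline g)) using 1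
    simp only [zero_smul, add_zero]
    ring

/-! ### Duality -/

section Duality

variable (h : C_c(Plane, ℝ)) {r p q b W : ℝ}

/-- The signed power `sign h · |h| ^ r`, whose multiples are the extremal test functions in the
duality of `L^p` norms. -/
def signedPower (hr : 0 < r) : C_c(Plane, ℝ) := rpowComp h⁺ hr - rpowComp h⁻ hr

lemma mul_signedPower_apply (hr : 0 < r) (x : Plane) :
    h x * signedPower h hr x = |h x| ^ (r + 1) := by
  rw [rpow_add_one' (abs_nonneg _) (by positivity)]
  change h x * ((h x)⁺ ^ r - (h x)⁻ ^ r) = _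
  rcases le_total 0 (h x) with hx | hx
  · rw [posPart_of_nonneg hx, negPart_of_nonneg hx, abs_of_nonneg hx, zero_rpow hr.ne']
    ring
  · rw [posPart_of_nonpos hx, negPart_of_nonpos hx, abs_of_nonpos hx, zero_rpow hr.ne']
    ring

lemma abs_signedPower_apply (hr : 0 < r) (x : Plane) : |signedPower h hr x| = |h x| ^ r := by
  change |(h x)⁺ ^ r - (h x)⁻ ^ r| = _
  rcases le_total 0 (h x) with hx | hx
  · rw [posPart_of_nonneg hx, negPart_of_nonneg hx, zero_rpow hr.ne', sub_zero,
      abs_rpow_of_nonneg hx]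
  · rw [posPart_of_nonpos hx, negPart_of_nonpos hx, zero_rpow hr.ne', zero_sub, abs_neg,
      abs_rpow_of_nonneg (neg_nonneg.2 hx), abs_neg]

theorem integral_abs_rpow_le_of_forall_abs_integral_mul_le (hpq : p.HolderConjugate q) (hb : 0 < b)
    (hdual : ∀ g : C_c(Plane, ℝ), |∫ x, h x * g x| ≤ b * (W + ∫ x, |g x| ^ q)) :
    ∫ x, |h x| ^ p ≤ (2 * b) ^ p * W := by
  have hb2 : 0 < 2 * b := by positivity
  set A := 2 * b
  set X := ∫ x, |h x| ^ p
  set κ := A ^ (1 - p)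
  have hκ : 0 < κ := by positivity
  have htest := hdual (κ • signedPower h hpq.sub_one_pos)
  have hleft (x : Plane) : h x * (κ • signedPower h hpq.sub_one_pos) x = κ * |h x| ^ p := by
    rw [CompactlySupportedContinuousMap.smul_apply, smul_eq_mul, mul_left_comm,
      mul_signedPower_apply, sub_add_cancel]
  have hright (x : Plane) :
      |(κ • signedPower h hpq.sub_one_pos) x| ^ q = A ^ (-p) * |h x| ^ p := by
    rw [CompactlySupportedContinuousMap.smul_apply, smul_eq_mul, abs_mul, abs_of_pos hκ,
      abs_signedPower_apply,
      mul_rpow hκ.le (by positivity), ← rpow_mul hb2.le, ← rpow_mul (abs_nonneg _),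
      hpq.sub_one_mul_conj, ← neg_sub p 1, neg_mul, hpq.sub_one_mul_conj]
  simp only [hleft, hright, integral_const_mul] at htest
  have hκA : κ = A * A ^ (-p) := by rw [← rpow_one_add' hb2.le] <;> grind [hpq.sub_one_pos]
  have hX : A ^ (-p) * X ≤ W := by
    refine le_of_mul_le_mul_left ?_ hb
    have hupper : 2 * b * A ^ (-p) * X ≤ b * (W + A ^ (-p) * X) :=
      hκA ▸ (le_abs_self _).trans htest
    linarith
  calc X = A ^ p * (A ^ (-p) * X) := by rw [rpow_neg hb2.le]; field_simp
    _ ≤ A ^ p * W := by gcongr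

end Duality

/-! ### Test functions -/

open scoped Distributions LineDeriv

/-- Real-valued smooth compactly supported functions on the plane. -/
abbrev PlaneTestFunction := 𝓓((⊤ : TopologicalSpace.Opens Plane), ℝ)

instance : CompactlySupportedContinuousMapClass PlaneTestFunction Plane ℝ where
  map_continuous f := f.continuous
  hasCompactSupport f := f.hasCompactSupport

section TestFunctions

variable (f h ω : PlaneTestFunction) (g : C_c(Plane, ℝ)) (v w : Plane) {t : ℝ} {i k : Fin 2}

lemma hasLineDerivAt_lineDerivOp (x : Plane) : HasLineDerivAt ℝ f ((∂_{v} f) x) x v :=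
  (f.contDiff.differentiable (by simp) x).hasFDerivAt.hasLineDerivAt v

lemma lineDerivOp_comm : ∂_{v} (∂_{w} f) = ∂_{w} (∂_{v} f) := by
  have hdiff (x : Plane) : DifferentiableAt ℝ (fderiv ℝ f) x :=
    (f.contDiff.fderiv_right (m := 1) (by norm_cast)).differentiable (by simp) x
  have hsecond (v w x : Plane) : (∂_{v} (∂_{w} f)) x = fderiv ℝ (fderiv ℝ f) x v w :=
    (congr_arg (· v) (fderiv_clm_apply (hdiff x) (differentiableAt_const w))).trans (by simp)
  ext x
  rw [hsecond, hsecond]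
  exact f.contDiff.contDiffAt.isSymmSndFDerivAt
    (minSmoothness_of_isRCLikeNormedField.trans_le (WithTop.coe_le_coe.2 le_top)) v w

lemma convolution_lineDerivOp {k k' : Plane → ℝ} (hk : Continuous k) (hk' : Continuous k')
    (hderiv : ∀ z, HasLineDerivAt ℝ k (k' z) z v) :
    (⇑(∂_{v} f : PlaneTestFunction) ∗ k) = (f ∗ k') := by
  ext x
  have hline (y : Plane) : HasLineDerivAt ℝ (fun y => k (x - y)) (-k' (x - y)) y v := by
    unfold HasLineDerivAt at hderiv ⊢
    convert! (hderiv (x - y)).comp_of_eq 0 (hasDerivAt_neg 0) neg_zero.symm using 1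
    · ext s
      simp only [Function.comp, neg_smul]
      congr 1
      abel
    · rw [mul_neg_one]
  have hparts := integral_mul_lineDeriv_eq_neg (F := f)
    (integrable_mul_of_continuous (∂_{v} f : PlaneTestFunction) (k := fun y => k (x - y))
      (by fun_prop))
    (integrable_mul_of_continuous f (k := fun y => -k' (x - y)) (by fun_prop))
    (integrable_mul_of_continuous f (k := fun y => k (x - y)) (by fun_prop))
    (fun y => hasLineDerivAt_lineDerivOp f v y) hline
  simp only [mul_neg, integral_neg, neg_inj] at hparts
  exact hparts.symm

lemma convolution_lineDerivOp_heatKernel (i : Fin 2) (t : ℝ) :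
    (⇑(∂_{dir i} f : PlaneTestFunction) ∗ heatKernel t) = (f ∗ heatKernelGrad i t) :=
  convolution_lineDerivOp f _ (continuous_heatKernel t) (continuous_heatKernelGrad i t)
    (hasLineDerivAt_heatKernel i t)

lemma convolution_lineDerivOp_heatKernelGrad (i : Fin 2) (t : ℝ) :
    (⇑(∂_{dir i} f : PlaneTestFunction) ∗ heatKernelGrad i t) = (f ∗ heatKernelHess i t) :=
  convolution_lineDerivOp f _ (continuous_heatKernelGrad i t) (continuous_heatKernelHess i t)
    (hasLineDerivAt_heatKernelGrad i t)

lemma sum_convolution_heatKernelHess (x : Plane)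
    (hlap : ∑ j, ∂_{dir j} (∂_{dir j} h) = ∂_{dir k} (∂_{dir i} ω)) :
    ∑ j, (h ∗ heatKernelHess j t) x =
      ((∂_{dir i} ω : PlaneTestFunction) ∗ heatKernelGrad k t) x := by
  calc ∑ j, (h ∗ heatKernelHess j t) x
      = ∑ j, (⇑(∂_{dir j} (∂_{dir j} h) : PlaneTestFunction) ∗ heatKernel t) x := by
        simp only [convolution_lineDerivOp_heatKernel, convolution_lineDerivOp_heatKernelGrad]
    _ = (⇑(∑ j, ∂_{dir j} (∂_{dir j} h) : PlaneTestFunction) ∗ heatKernel t) x := by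
        refine (integral_finsetSum _ fun j _ => integrable_mul_of_continuous
          (∂_{dir j} (∂_{dir j} h) : PlaneTestFunction) (k := fun y => heatKernel t (x - y))
          (by fun_prop)).symm.trans (integral_congr_ae (Eventually.of_forall fun y => ?_))
        simp [Fin.sum_univ_two]
    _ = ((∂_{dir i} ω : PlaneTestFunction) ∗ heatKernelGrad k t) x := by
        rw [hlap, convolution_lineDerivOp_heatKernel]

lemma abs_deriv_heatPairing_le
    (hlap : ∑ j, ∂_{dir j} (∂_{dir j} h) = ∂_{dir k} (∂_{dir i} ω)) (ht : 0 < t) :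
    |2 * ∫ x, (∑ j, (h ∗ heatKernelHess j t) x) * (g ∗ heatKernel t) x| ≤
      heatDissipation i k ω g t := by
  have hK := isHeatSubordinate_heatKernel
  have hK₁ := isHeatSubordinate_heatKernelGrad
  have hparts : ∫ x, (g ∗ heatKernel t) x * (⇑(∂_{dir i} ω : PlaneTestFunction) ∗
      heatKernelGrad k t) x = -∫ x, (g ∗ heatKernelGrad k t) x * (ω ∗ heatKernelGrad i t) x := by
    rw [← convolution_lineDerivOp_heatKernel ω]
    exact integral_mul_lineDeriv_eq_neg (v := dir k)
      (integrable_convolution_mul_convolution (hK₁ k) hK g (∂_{dir i} ω : PlaneTestFunction) ht)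
      (integrable_convolution_mul_convolution hK (hK₁ k) g (∂_{dir i} ω : PlaneTestFunction) ht)
      (integrable_convolution_mul_convolution hK hK g (∂_{dir i} ω : PlaneTestFunction) ht)
      (hasLineDerivAt_convolution g (continuous_heatKernel t) (continuous_heatKernelGrad k t)
        (hasLineDerivAt_heatKernel k t))
      (hasLineDerivAt_convolution (∂_{dir i} ω : PlaneTestFunction) (continuous_heatKernel t)
        (continuous_heatKernelGrad k t) (hasLineDerivAt_heatKernel k t))
  simp only [sum_convolution_heatKernelHess h ω _ hlap]
  simp only [mul_comm _ ((g ∗ heatKernel t) _)]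
  rw [hparts, abs_mul, abs_neg, abs_two, heatDissipation]
  gcongr
  simp only [mul_comm ((g ∗ _) _)]
  exact abs_integral_le_integral_abs

theorem abs_integral_mul_le_of_laplacian_eq {p q : ℝ} (hpq : p.HolderConjugate q)
    (hlap : ∑ j, ∂_{dir j} (∂_{dir j} h) = ∂_{dir k} (∂_{dir i} ω)) :
    |∫ x, h x * g x| ≤ 10 * (p * q) * ((∫ x, |ω x| ^ p) + ∫ x, |g x| ^ q) :=
  ((dissipatesAtMost_heatDissipation ω g hpq i k).mono
    (fun _ ht => abs_deriv_heatPairing_le h ω g hlap ht) le_rfl).abs_le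
    (fun _ ht => hasDerivAt_heatPairing h g ht) (tendsto_heatPairing_zero h g)
    (tendsto_heatPairing_atTop h g)

theorem eLpNorm_le_of_laplacian_eq {p q : ℝ} (hpq : p.HolderConjugate q)
    (hlap : ∑ j, ∂_{dir j} (∂_{dir j} h) = ∂_{dir k} (∂_{dir i} ω)) :
    eLpNorm h (ENNReal.ofReal p) ≤
      ENNReal.ofReal (20 * (p * q)) * eLpNorm ω (ENNReal.ofReal p) := by
  have hp := hpq.pos
  have hq := hpq.symm.pos
  have hp0 : ENNReal.ofReal p ≠ 0 := (ENNReal.ofReal_pos.2 hp).ne'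
  have hnorm (f : PlaneTestFunction) : eLpNorm f (ENNReal.ofReal p) =
      ENNReal.ofReal ((∫ x, |f x| ^ p) ^ p⁻¹) := by
    rw [(f.continuous.memLp_of_hasCompactSupport f.hasCompactSupport).eLpNorm_eq_integral_rpow_norm
      hp0 ENNReal.ofReal_ne_top, ENNReal.toReal_ofReal hp.le]
    rfl
  have hint (f : PlaneTestFunction) : 0 ≤ ∫ x, |f x| ^ p :=
    integral_nonneg fun x => rpow_nonneg (abs_nonneg _) p
  have hbound : ∫ x, |h x| ^ p ≤ (20 * (p * q)) ^ p * ∫ x, |ω x| ^ p := by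
    convert! integral_abs_rpow_le_of_forall_abs_integral_mul_le (h : C_c(Plane, ℝ)) hpq
      (by positivity) fun g => abs_integral_mul_le_of_laplacian_eq h ω g hpq hlap using 3
    ring
  rw [hnorm, hnorm, ← ENNReal.ofReal_mul (by positivity)]
  refine ENNReal.ofReal_le_ofReal ((rpow_le_rpow (hint h) hbound (by positivity)).trans_eq ?_)
  rw [mul_rpow (by positivity) (hint ω), rpow_rpow_inv (by positivity) hp.ne']

end TestFunctions

/-! ### Divergence-free fields -/

section DivergenceFree

variable (U : Fin 2 → PlaneTestFunction)

/-- The scalar curl `∂₁U² - ∂₂U¹` of a field given by its components, which are indexed from `0`. -/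
def testCurl : PlaneTestFunction := ∂_{dir 0} (U 1) - ∂_{dir 1} (U 0)

variable {U} (hdiv : ∑ j, ∂_{dir j} (U j) = 0)
include hdiv

lemma laplacian_fst_eq_of_divergence_eq_zero :
    ∑ j, ∂_{dir j} (∂_{dir j} (U 0)) = ∂_{dir 1} (-testCurl U) := by
  rw [Fin.sum_univ_two] at hdiv ⊢
  rw [eq_neg_of_add_eq_zero_left hdiv, LineDeriv.lineDerivOp_neg, lineDerivOp_comm, testCurl,
    neg_sub, sub_eq_add_neg, LineDeriv.lineDerivOp_add, LineDeriv.lineDerivOp_neg, add_comm]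

lemma laplacian_snd_eq_of_divergence_eq_zero :
    ∑ j, ∂_{dir j} (∂_{dir j} (U 1)) = ∂_{dir 0} (testCurl U) := by
  rw [Fin.sum_univ_two] at hdiv ⊢
  rw [eq_neg_of_add_eq_zero_right hdiv, LineDeriv.lineDerivOp_neg, lineDerivOp_comm (U 0), testCurl,
    sub_eq_add_neg, LineDeriv.lineDerivOp_add, LineDeriv.lineDerivOp_neg]

theorem eLpNorm_lineDerivOp_le_curl {p q : ℝ} (hpq : p.HolderConjugate q) (i j : Fin 2) :
    eLpNorm (∂_{dir i} (U j) : PlaneTestFunction) (ENNReal.ofReal p) ≤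
      ENNReal.ofReal (20 * (p * q)) * eLpNorm (testCurl U) (ENNReal.ofReal p) := by
  have hcomm {h ω : PlaneTestFunction} {k : Fin 2}
      (hlap : ∑ j, ∂_{dir j} (∂_{dir j} h) = ∂_{dir k} ω) :
      ∑ j, ∂_{dir j} (∂_{dir j} (∂_{dir i} h)) = ∂_{dir k} (∂_{dir i} ω) := by
    rw [lineDerivOp_comm ω, ← hlap, LineDeriv.lineDerivOp_sum]
    simp only [lineDerivOp_comm _ (dir i)]
  match j with
  | 0 =>
    refine (eLpNorm_le_of_laplacian_eq _ _ hpq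
      (hcomm (laplacian_fst_eq_of_divergence_eq_zero hdiv))).trans_eq ?_
    congr 1
    exact eLpNorm_neg (testCurl U) _ _
  | 1 =>
    exact eLpNorm_le_of_laplacian_eq _ _ hpq (hcomm (laplacian_snd_eq_of_divergence_eq_zero hdiv))

end DivergenceFree

section Components

lemma eLpNorm_le_sum_of_abs_le_sum {α ι : Type*} [MeasurableSpace α] {μ : Measure α} [Fintype ι]
    {f : α → ℝ} {G : ι → α → ℝ} (hG : ∀ i, AEStronglyMeasurable (G i) μ)
    (hf : ∀ x, |f x| ≤ ∑ i, |G i x|) {p : ENNReal} (hp : 1 ≤ p) :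
    eLpNorm f p μ ≤ ∑ i, eLpNorm (G i) p μ := by
  have hsum : eLpNorm (∑ i, fun x => |G i x|) p μ ≤ ∑ i, eLpNorm (fun x => |G i x|) p μ :=
    eLpNorm_sum_le (fun i _ => (hG i).norm) hp
  simp_rw [← norm_eq_abs, eLpNorm_norm] at hsum
  exact (eLpNorm_mono_real fun x => by simpa using hf x).trans hsum

lemma hasFDerivAt_coord_comp {u : Plane → Plane} {u' : Plane →L[ℝ] Plane} {x : Plane}
    (hu : HasFDerivAt u u' x) (j : Fin 2) :
    ∃ L : Plane →L[ℝ] ℝ, HasFDerivAt (fun y => coord j (u y)) L x ∧ ∀ v, L v = coord j (u' v) :=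
  match j with
  | 0 => ⟨_, hu.fst, fun _ => rfl⟩
  | 1 => ⟨_, hu.snd, fun _ => rfl⟩

variable {u : Plane → Plane} (hu : ContDiff ℝ (⊤ : ℕ∞) u) (huc : HasCompactSupport u)

/-- The components of a smooth compactly supported field, as test functions. -/
def components (j : Fin 2) : PlaneTestFunction where
  toFun x := coord j (u x)
  contDiff' := match j with
    | 0 => hu.fst
    | 1 => hu.snd
  hasCompactSupport' := huc.comp_left (g := coord j) (by fin_cases j <;> rfl)
  tsupport_subset' := subset_univ _

lemma lineDerivOp_components (j : Fin 2) (v x : Plane) :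
    (∂_{v} (components hu huc j) : PlaneTestFunction) x = coord j (fderiv ℝ u x v) := by
  obtain ⟨L, hL, hLv⟩ :=
    hasFDerivAt_coord_comp (hu.differentiable (by simp) x).hasFDerivAt j
  exact (congr_arg (· v) hL.fderiv).trans (hLv v)

lemma sum_lineDerivOp_components_eq_zero (hdiv : ∀ x, diverg u x = 0) :
    ∑ j, ∂_{dir j} (components hu huc j) = 0 := by
  ext x
  rw [Fin.sum_univ_two, add_apply, lineDerivOp_components, lineDerivOp_components]
  exact hdiv x

lemma curl2_eq_testCurl : curl2 u = testCurl (components hu huc) := by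
  ext x
  rw [testCurl, sub_apply, lineDerivOp_components, lineDerivOp_components]
  rfl

lemma sqrt_gradSq_le (x : Plane) :
    √(gradSq u x) ≤ ∑ ij : Fin 2 × Fin 2,
      |(∂_{dir ij.1} (components hu huc ij.2) : PlaneTestFunction) x| := by
  have hgradSq :
      gradSq u x = ∑ ij : Fin 2 × Fin 2,
      |(∂_{dir ij.1} (components hu huc ij.2) : PlaneTestFunction) x| ^ 2 := by
    simp only [lineDerivOp_components, sq_abs, Fintype.sum_prod_type,
      Fin.sum_univ_two]
    rfl
  rw [hgradSq]
  exact sqrt_le_iff.2 ⟨Finset.sum_nonneg fun _ _ => abs_nonneg _,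
    Finset.sum_sq_le_sq_sum_of_nonneg fun _ _ => abs_nonneg _⟩

include hu huc in
theorem eLpNorm_sqrt_gradSq_le_curl2 (hdiv : ∀ x, diverg u x = 0) {p q : ℝ}
    (hpq : p.HolderConjugate q) :
    eLpNorm (fun x => √(gradSq u x)) (ENNReal.ofReal p) ≤
      4 * (ENNReal.ofReal (20 * (p * q)) * eLpNorm (curl2 u) (ENNReal.ofReal p)) := by
  let G (ij : Fin 2 × Fin 2) : PlaneTestFunction := ∂_{dir ij.1} (components hu huc ij.2)
  have hentry (ij : Fin 2 × Fin 2) : eLpNorm (G ij) (ENNReal.ofReal p) ≤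
      ENNReal.ofReal (20 * (p * q)) * eLpNorm (curl2 u) (ENNReal.ofReal p) := by
    rw [curl2_eq_testCurl hu huc]
    exact eLpNorm_lineDerivOp_le_curl (sum_lineDerivOp_components_eq_zero hu huc hdiv) hpq _ _
  have hsum : eLpNorm (fun x => √(gradSq u x)) (ENNReal.ofReal p) ≤
      ∑ ij, eLpNorm (G ij) (ENNReal.ofReal p) := by
    refine eLpNorm_le_sum_of_abs_le_sum (fun ij => (G ij).continuous.aestronglyMeasurable)
      (fun x => ?_) (ENNReal.one_le_ofReal.2 hpq.lt.le)
    rw [abs_of_nonneg (sqrt_nonneg _)]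
    exact sqrt_gradSq_le hu huc x
  refine hsum.trans ((Finset.sum_le_sum fun ij _ => hentry ij).trans_eq ?_)
  simp

end Components

/-- Yudovich's Calderón–Zygmund estimate (6.5):
there is an absolute constant `c > 0` such that for every `1 < p < ∞` and
every divergence-free `u ∈ C_c^∞(ℝ²;ℝ²)`,
`‖∇u‖_{L^p} ≤ c·(p²/(p−1))·‖curl u‖_{L^p}`. -/
theorem statement19 :
    ∃ c : ℝ, 0 < c ∧
      ∀ p : ℝ, 1 < p →
        ∀ u : Plane → Plane,
          ContDiff ℝ (⊤ : ℕ∞) u → HasCompactSupport u →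
          (∀ x, diverg u x = 0) →
          eLpNorm (fun x => Real.sqrt (gradSq u x)) (ENNReal.ofReal p) volume
            ≤ ENNReal.ofReal (c * p ^ 2 / (p - 1)) *
              eLpNorm (fun x => curl2 u x) (ENNReal.ofReal p) volume := by
  refine ⟨80, by norm_num, fun p hp u hu huc hdiv => ?_⟩
  have hconst : 4 * (20 * (p * p.conjExponent)) = 80 * p ^ 2 / (p - 1) := by
    rw [Real.conjExponent]
    ring
  rw [← hconst, ENNReal.ofReal_mul zero_le_four, ENNReal.ofReal_ofNat, mul_assoc]
  exact eLpNorm_sqrt_gradSq_le_curl2 hu huc hdiv (.conjExponent hp)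
end
end
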